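/- arXiv:2007.09174 — 2 statements merged into one kernel-verified Lean document; each statement's English description precedes it below -/
import Mathlib

section
/- Let (R, m, k) be a commutative Noetherian local ring with m^3 = 0. Then R is Tor-persistent: for every finitely generated R-module M, if Tor_i^R(M, M) = 0 for all sufficiently large i, then M has finite projective dimension. -/
/-!
STATEMENT 0: Let (R, m, k) be a commutative Noetherian local ring with m^3 = 0. Then R is
Tor-persistent: for every finitely generated R-module M, if Tor_i^R(M, M) = 0 for all
sufficiently large i, then M has finite projective dimension.

Here "M has finite projective dimension" is expressed through the standard characterization:
there is an `n` such that `Ext^i_R(M, N) = 0` for all `R`-modules `N` and all `i > n`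
(this holds precisely when the projective dimension of `M` is at most `n`).
-/

/-!
Write `S n` for the syzygies and `F n` for the free modules of a minimal free resolution of `M`.
Dimension shifting turns `Tor_i(M, M) = 0` for `i ≫ 0` into `Tor_1(S j, S l) = 0` for `j + l ≫ 0`.
Fix `N = S n` with `n` large, let `F = R ^ a → N` be its minimal cover and `K = S (n + 1)` its
kernel. Since `N` lies in `m F (n - 1)` and `m ^ 3 = 0`, one has `m ^ 2 N = 0`. The vanishing of
`Tor` makes two maps injective:

* `N ⊗ N → N ⊗ F (n - 1)`, whose image is killed by `m`; hence `m (N ⊗ N) = 0`;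
* `N ⊗ K → N ⊗ F`.

Identify `F ⊗ F` with `a × a` matrices. The first fact says that every matrix over `m` is a sum of
a matrix whose rows lie in `K` and a matrix whose columns lie in `K`. The second says that a
matrix whose rows and columns all lie in `K` has its entries in `m ^ 2`. So over `W = m / m ^ 2`,
with `A` the matrices whose rows lie in the image of `K`, the space of `a × a` matrices is the
direct sum of `A` and its transpose. In particular `2 ℓ(A) = a ^ 2 ℓ(W)`. But `X ↦ X - Xᵀ` is
injective on `A`, because a symmetric matrix in `A` lies in `A ∩ Aᵀ = 0`, and its values are
determined by the entries above the diagonal, so `2 ℓ(A) ≤ a (a - 1) ℓ(W)`. This forces `a = 0` or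
`W = 0`, and in either case `N = 0` (`antisymm_count`, `eq_zero_or_maximalIdeal_eq_bot`,
`FGMod.subsingleton_syz`). The minimal free resolution of `M` is therefore finite.
-/

open CategoryTheory Limits

universe u

/-- `M` has finite projective dimension over `R`: for some `n`, the functors `Ext^i(M, -)`
vanish for all `i > n`. -/
def HasFiniteProjectiveDimension (R : Type u) [CommRing R] (M : Type u) [AddCommGroup M]
    [Module R M] : Prop :=
  ∃ n : ℕ, ∀ (N : ModuleCat.{u} R) (i : ℕ), n < i →
    IsZero (((Ext R (ModuleCat.{u} R) i).obj (Opposite.op (ModuleCat.of R M))).obj N)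

open scoped TensorProduct

/-! ### Counting antisymmetric matrices -/

lemma isArtinian_of_cube {R : Type*} [CommRing R] [IsNoetherianRing R] [IsLocalRing R]
    (hm3 : (IsLocalRing.maximalIdeal R) ^ 3 = ⊥) : IsArtinianRing R :=
  (isArtinianRing_iff_isNilpotent_maximalIdeal R).2 ⟨3, hm3⟩

lemma card_lt_pairs (a : ℕ) :
    Fintype.card {p : Fin a × Fin a // p.1 < p.2} + Fintype.card {p : Fin a × Fin a // p.1 < p.2}
      + a = a * a := by
  have e : Fintype.card {p : Fin a × Fin a // p.1 < p.2} =
      Fintype.card {p : Fin a × Fin a // p.2 < p.1} :=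
    Fintype.card_congr ((Equiv.prodComm _ _).subtypeEquiv (by intro p; simp))
  nth_rewrite 2 [e]
  have h1 : ∑ p : Fin a × Fin a, ((if p.1 < p.2 then 1 else 0) + (if p.2 < p.1 then 1 else 0)
      + (if p.1 = p.2 then 1 else 0)) = a * a := by
    rw [Finset.sum_congr rfl (g := fun _ => 1)]
    · simp
    · rintro ⟨i, j⟩ -
      rcases lt_trichotomy i j with h | h | h
      · simp [h, h.ne, h.le]
      · simp [h]
      · simp [h, h.ne', h.le]
  rw [Finset.sum_add_distrib, Finset.sum_add_distrib] at h1
  rw [Fintype.card_subtype, Fintype.card_subtype, Finset.card_filter, Finset.card_filter]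
  have h2 : ∑ p : Fin a × Fin a, (if p.1 = p.2 then 1 else 0) = a := by
    rw [Fintype.sum_prod_type]; simp
  omega

/-- If the `a × a` matrices over `W` are the direct sum of the matrices with rows in `K` and the
matrices with columns in `K`, then `a = 0` or `W = 0`: lengths of the maps `(Y, Z) ↦ Y + Zᵀ`
(surjective) and `Y ↦ Y - Yᵀ` (injective, with antisymmetric values) are incompatible otherwise. -/
lemma antisymm_count {R W : Type*} [CommRing R] [AddCommGroup W] [Module R W] [IsArtinian R W]
    [IsNoetherian R W] {a : ℕ} (K : Submodule R (Fin a → W))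
    (hsum : ∀ X : Fin a → Fin a → W, ∃ Y Z : Fin a → Fin a → W,
      (∀ i, Y i ∈ K) ∧ (∀ j, Z j ∈ K) ∧ ∀ i j, X i j = Y i j + Z j i)
    (hinter : ∀ X : Fin a → Fin a → W, (∀ i, X i ∈ K) → (∀ j, (fun i => X i j) ∈ K) → X = 0) :
    a = 0 ∨ Subsingleton W := by
  let S : ((Fin a → K) × (Fin a → K)) →ₗ[R] (Fin a → Fin a → W) :=
    { toFun := fun p i j => (p.1 i : Fin a → W) j + (p.2 j : Fin a → W) i
      map_add' := fun p q => by ext i j; simp; abel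
      map_smul' := fun r p => by ext i j; simp }
  have hS : Function.Surjective S := fun X => by
    obtain ⟨Y, Z, hY, hZ, h⟩ := hsum X
    exact ⟨(fun i => ⟨Y i, hY i⟩, fun j => ⟨Z j, hZ j⟩), by ext i j; exact (h i j).symm⟩
  let D : (Fin a → K) →ₗ[R] ({p : Fin a × Fin a // p.1 < p.2} → W) :=
    { toFun := fun Y p => (Y p.1.1 : Fin a → W) p.1.2 - (Y p.1.2 : Fin a → W) p.1.1
      map_add' := fun p q => by ext i; simp; abel
      map_smul' := fun r p => by ext i; simp [smul_sub] }
  have hD : Function.Injective D := by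
    rw [injective_iff_map_eq_zero]
    intro Y hY
    have hlt : ∀ i j, i < j → (Y i : Fin a → W) j = (Y j : Fin a → W) i := fun i j hij =>
      sub_eq_zero.1 (congrFun hY ⟨(i, j), hij⟩)
    have hsymm : ∀ i j, (Y i : Fin a → W) j = (Y j : Fin a → W) i := fun i j => by
      rcases lt_trichotomy i j with h | h | h
      · exact hlt i j h
      · rw [h]
      · exact (hlt j i h).symm
    have := hinter (fun i => Y i) (fun i => (Y i).2) (fun j => by
      have : (fun i => (Y i : Fin a → W) j) = Y j := funext fun i => hsymm i j
      rw [this]; exact (Y j).2)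
    ext i j
    exact congrFun (congrFun this i) j
  -- With `c` the number of pairs `i < j`, this gives `a ^ 2 ℓ(W) ≤ 2 ℓ(K ^ a) ≤ 2 c ℓ(W)`,
  -- whereas `2 c + a = a ^ 2`.
  have h1 := Module.length_le_of_surjective S hS
  have h2 := Module.length_le_of_injective D hD
  rw [Module.length_prod] at h1
  have h3 := h1.trans (add_le_add h2 h2)
  have hfin : Module.length R W ≠ ⊤ := Module.length_ne_top
  obtain ⟨w, hw⟩ := ENat.ne_top_iff_exists.1 hfin
  rw [Module.length_pi, Module.length_pi, Module.length_pi, ← hw] at h3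
  simp only [ENat.card_eq_coe_fintype_card, Fintype.card_fin] at h3
  norm_cast at h3
  have hc := card_lt_pairs a
  by_cases hw0 : w = 0
  · right
    rw [← Module.length_eq_zero_iff (R := R), ← hw, hw0]; rfl
  · left
    set c := Fintype.card {p : Fin a × Fin a // p.1 < p.2}
    by_contra ha
    have : 0 < a * w := Nat.mul_pos (Nat.pos_of_ne_zero ha) (Nat.pos_of_ne_zero hw0)
    have : (c + c + a) * w = a * a * w := by rw [hc]
    nlinarith

/-! ### Matrices over the maximal ideal -/

open IsLocalRing in
/-- A module `M` with `m ^ 2 M = 0`, `m (M ⊗ M) = 0` and `Tor_1(M, M) = 0` vanishes or lives over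
a field. Here `p` is a minimal free cover of `M`, and the vanishing of `Tor_1(M, M)` is expressed
as injectivity of `M ⊗ ker p → M ⊗ R ^ a`. -/
lemma eq_zero_or_maximalIdeal_eq_bot {R M : Type*} [CommRing R] [IsNoetherianRing R] [IsLocalRing R]
    (hm3 : (maximalIdeal R) ^ 3 = ⊥) [AddCommGroup M] [Module R M]
    {a : ℕ} (p : (Fin a → R) →ₗ[R] M) (hp : Function.Surjective p)
    (hK : ∀ v, p v = 0 → ∀ i, v i ∈ maximalIdeal R)
    (h2 : ∀ x ∈ (maximalIdeal R) ^ 2, ∀ w : M, x • w = 0)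
    (hMM : ∀ x ∈ maximalIdeal R, ∀ u v : M, (x • u) ⊗ₜ[R] v = (0 : M ⊗[R] M))
    (hinj : Function.Injective (LinearMap.lTensor M (LinearMap.ker p).subtype)) :
    a = 0 ∨ maximalIdeal R = ⊥ := by
  have := isArtinian_of_cube hm3
  set m := maximalIdeal R with hm
  -- `θ` identifies `R ^ a ⊗ R ^ a` with `a × a` matrices.
  let θ : (Fin a → R) ⊗[R] (Fin a → R) →ₗ[R] (Fin a → Fin a → R) :=
    TensorProduct.lift (LinearMap.mk₂ R (fun f g i j => f i * g j)
      (fun f f' g => by ext i j; simp [add_mul]) (fun c f g => by ext i j; simp [mul_assoc])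
      (fun f g g' => by ext i j; simp [mul_add]) (fun c f g => by ext i j; simp [mul_left_comm]))
  have hθ : ∀ f g i j, θ (f ⊗ₜ g) i j = f i * g j := fun f g i j => by simp [θ]
  -- As `m (M ⊗ M) = 0`, a matrix over `m` lies in the kernel of `p ⊗ p`, which is generated by
  -- `R ^ a ⊗ ker p` (rows in `ker p`) and `ker p ⊗ R ^ a` (columns in `ker p`).
  have hsum : ∀ X : Fin a → Fin a → R, (∀ i j, X i j ∈ m) → ∃ Y Z : Fin a → Fin a → R,
      (∀ i, p (Y i) = 0) ∧ (∀ j, p (Z j) = 0) ∧ ∀ i j, X i j = Y i j + Z j i := by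
    intro X hX
    let t : (Fin a → R) ⊗[R] (Fin a → R) :=
      ∑ i, ∑ j, X i j • (Pi.single i (1 : R) ⊗ₜ[R] Pi.single j (1 : R))
    have htX : θ t = X := by
      ext i j
      simp [t, hθ, Finset.sum_apply, Pi.single_apply]
    have ht0 : TensorProduct.map p p t = 0 := by
      simp only [t, map_sum, map_smul, TensorProduct.map_tmul, TensorProduct.smul_tmul']
      exact Finset.sum_eq_zero fun i _ => Finset.sum_eq_zero fun j _ => hMM _ (hX i j) _ _
    have htk : t ∈ LinearMap.ker (TensorProduct.map p p) := ht0
    rw [TensorProduct.map_ker (f := (LinearMap.ker p).subtype) (f' := (LinearMap.ker p).subtype)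
      (LinearMap.exact_subtype_ker_map p) hp (LinearMap.exact_subtype_ker_map p) hp,
      Submodule.mem_sup] at htk
    obtain ⟨_, ⟨y, rfl⟩, _, ⟨z, rfl⟩, hyz⟩ := htk
    refine ⟨θ (LinearMap.lTensor _ (LinearMap.ker p).subtype y),
      fun j i => θ (LinearMap.rTensor _ (LinearMap.ker p).subtype z) i j, fun i => ?_, fun j => ?_,
      fun i j => ?_⟩
    · clear hyz
      induction y with
      | zero => simp
      | add y y' h h' => simp only [map_add, Pi.add_apply, h, h', add_zero]
      | tmul f g =>
        have : θ (LinearMap.lTensor _ (LinearMap.ker p).subtype (f ⊗ₜ g)) i = f i • g.1 := by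
          ext j; simp [hθ]
        rw [this, map_smul, LinearMap.mem_ker.1 g.2, smul_zero]
    · let c : (Fin a → R) ⊗[R] (Fin a → R) →ₗ[R] M :=
        p ∘ₗ LinearMap.pi (fun i => LinearMap.proj j ∘ₗ LinearMap.proj i ∘ₗ θ)
      have hc : c ∘ₗ LinearMap.rTensor _ (LinearMap.ker p).subtype = 0 := by
        refine TensorProduct.ext' fun f g => ?_
        have : (fun i => θ (f.1 ⊗ₜ g) i j) = g j • f.1 := by
          ext i; simp [hθ, mul_comm]
        change p (fun i => θ (f.1 ⊗ₜ g) i j) = 0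
        rw [this, map_smul, LinearMap.mem_ker.1 f.2, smul_zero]
      exact LinearMap.congr_fun hc z
    · rw [← htX, ← hyz, map_add]; rfl
  -- The rows of `X` give an element `t` of `R ^ a ⊗ ker p`. As the columns of `X` lie in `ker p`,
  -- the image of `t` in `M ⊗ R ^ a` is zero, so by injectivity `t` comes from `ker p ⊗ ker p`, and
  -- `ker p` has coordinates in `m`.
  have hinter : ∀ X : Fin a → Fin a → R, (∀ i, p (X i) = 0) → (∀ j, p (fun i => X i j) = 0) →
      ∀ i j, X i j ∈ m ^ 2 := by
    intro X hr hc
    let e : Fin a → (Fin a → R) := fun j => Pi.single j 1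
    let t : (Fin a → R) ⊗[R] LinearMap.ker p := ∑ i, e i ⊗ₜ ⟨X i, hr i⟩
    have hexp : ∀ i, X i = ∑ j, X i j • e j := fun i => by
      ext k; simp [e, Finset.sum_apply, Pi.single_apply]
    have hcol : ∀ j, (fun i => X i j) = ∑ i, X i j • e i := fun j => by
      ext k; simp [e, Finset.sum_apply, Pi.single_apply]
    have ht : LinearMap.rTensor (LinearMap.ker p) p t = 0 := by
      apply hinj
      simp only [t, map_zero, map_sum, LinearMap.rTensor_tmul, LinearMap.lTensor_tmul,
        Submodule.subtype_apply]
      calc ∑ i, p (e i) ⊗ₜ[R] X i = ∑ i, ∑ j, (X i j • p (e i)) ⊗ₜ[R] e j := by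
            refine Finset.sum_congr rfl fun i _ => ?_
            conv_lhs => rw [hexp i]
            simp only [TensorProduct.tmul_sum, TensorProduct.tmul_smul, TensorProduct.smul_tmul']
        _ = ∑ j, p (fun i => X i j) ⊗ₜ[R] e j := by
            rw [Finset.sum_comm]
            refine Finset.sum_congr rfl fun j _ => ?_
            rw [hcol j]
            simp only [map_sum, map_smul, TensorProduct.sum_tmul]
        _ = 0 := by simp [hc]
    obtain ⟨s, hs⟩ := (rTensor_exact (LinearMap.ker p) (LinearMap.exact_subtype_ker_map p) hp t).1 ht
    have htX : θ (LinearMap.lTensor _ (LinearMap.ker p).subtype t) = X := by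
      ext i j
      simp [t, hθ, e, Finset.sum_apply, Pi.single_apply]
    rw [← htX, ← hs]
    clear hs
    intro i j
    induction s with
    | zero => simp
    | add y y' h h' => simpa only [map_add] using! add_mem h h'
    | tmul f g =>
      simp only [LinearMap.rTensor_tmul, LinearMap.lTensor_tmul, hθ, Submodule.subtype_apply, pow_two]
      exact Ideal.mul_mem_mul (hK _ f.2 i) (hK _ g.2 j)
  -- Both facts descend to matrices over `m / m ^ 2`, because `ker p` contains `m ^ 2 R ^ a`.
  let q : (Fin a → m) →ₗ[R] (Fin a → m.Cotangent) :=
    LinearMap.pi fun i => m.toCotangent ∘ₗ LinearMap.proj i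
  let ι : (Fin a → m) →ₗ[R] (Fin a → R) := LinearMap.pi fun i => m.subtype ∘ₗ LinearMap.proj i
  have hqs : Function.Surjective m.toCotangent := m.toCotangent_surjective
  have : IsNoetherian R m.Cotangent := isNoetherian_of_surjective _ (LinearMap.range_eq_top.2 hqs)
  have : IsArtinian R m.Cotangent := isArtinian_of_surjective _ _ hqs
  have hbot : ∀ v : Fin a → R, (∀ i, v i ∈ m ^ 2) → p v = 0 := fun v hv => by
    have : v = ∑ i, v i • (Pi.single i (1 : R) : Fin a → R) := by
      ext k; simp [Finset.sum_apply, Pi.single_apply]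
    rw [this, map_sum]
    exact Finset.sum_eq_zero fun i _ => by rw [map_smul, h2 _ (hv i)]
  have hmem : ∀ v : Fin a → m, q v ∈ Submodule.map q (LinearMap.ker (p ∘ₗ ι)) → p (ι v) = 0 := by
    rintro v ⟨v', hv', h⟩
    have h0 : p (ι (v - v')) = 0 := hbot _ fun i => by
      have : m.toCotangent ((v - v') i) = 0 := by
        have := congrFun h i
        simp only [Pi.sub_apply, map_sub, sub_eq_zero]
        exact this.symm
      exact (m.toCotangent_eq_zero _).1 this
    rw [map_sub, map_sub, sub_eq_zero] at h0
    rw [h0]; exact hv'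
  have hlift : ∀ X : Fin a → Fin a → m.Cotangent, ∃ X' : Fin a → Fin a → m,
      ∀ i j, m.toCotangent (X' i j) = X i j := fun X => by
    choose f hf using hqs
    exact ⟨fun i j => f (X i j), fun i j => hf _⟩
  have hsum' : ∀ X : Fin a → Fin a → m.Cotangent, ∃ Y Z : Fin a → Fin a → m.Cotangent,
      (∀ i, Y i ∈ Submodule.map q (LinearMap.ker (p ∘ₗ ι))) ∧
      (∀ j, Z j ∈ Submodule.map q (LinearMap.ker (p ∘ₗ ι))) ∧ ∀ i j, X i j = Y i j + Z j i := by
    intro X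
    obtain ⟨X', hX'⟩ := hlift X
    obtain ⟨Y, Z, hY, hZ, h⟩ := hsum (fun i j => X' i j) fun i j => (X' i j).2
    let Y' : Fin a → Fin a → m := fun i j => ⟨Y i j, hK _ (hY i) j⟩
    let Z' : Fin a → Fin a → m := fun i j => ⟨Z i j, hK _ (hZ i) j⟩
    refine ⟨fun i => q (Y' i), fun i => q (Z' i), fun i => ⟨Y' i, hY i, rfl⟩,
      fun i => ⟨Z' i, hZ i, rfl⟩, fun i j => ?_⟩
    have : X' i j = Y' i j + Z' j i := Subtype.ext (h i j)
    rw [← hX', this, map_add]; rfl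
  have hinter' : ∀ X : Fin a → Fin a → m.Cotangent,
      (∀ i, X i ∈ Submodule.map q (LinearMap.ker (p ∘ₗ ι))) →
      (∀ j, (fun i => X i j) ∈ Submodule.map q (LinearMap.ker (p ∘ₗ ι))) → X = 0 := by
    intro X hr hc
    obtain ⟨X', hX'⟩ := hlift X
    ext i j
    rw [← hX']
    refine (m.toCotangent_eq_zero _).2 (hinter (fun i j => X' i j) (fun i => ?_) (fun j => ?_) i j)
    · refine hmem (X' i) ?_
      have : q (X' i) = X i := funext fun j => hX' i j
      rw [this]; exact hr i
    · refine hmem (fun i => X' i j) ?_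
      have : q (fun i => X' i j) = fun i => X i j := funext fun i => hX' i j
      rw [this]; exact hc j
  rcases antisymm_count _ hsum' hinter' with h | h
  · exact Or.inl h
  · right
    have hle : m ≤ m ^ 2 := fun x hx =>
      (m.toCotangent_eq_zero ⟨x, hx⟩).1 (Subsingleton.elim _ _)
    have h23 : m ^ 2 ≤ m ^ 3 := by
      rw [pow_succ m 2, pow_two]
      exact Ideal.mul_mono_left (by simpa [pow_two] using hle)
    exact le_bot_iff.1 ((hle.trans h23).trans hm3.le)

/-! ### Minimal free resolutions -/

open IsLocalRing in
/-- A finitely generated module is covered by a free module with kernel inside `m R ^ a`. -/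
lemma exists_minimal_cover (R : Type u) [CommRing R] [IsLocalRing R] (M : Type u)
    [AddCommGroup M] [Module R M] [Module.Finite R M] :
    ∃ (a : ℕ) (p : (Fin a → R) →ₗ[R] M), Function.Surjective p ∧
      ∀ v, p v = 0 → ∀ i, v i ∈ maximalIdeal R := by
  let k := ResidueField R
  let b := Module.finBasis k (k ⊗[R] M)
  have hsurj : Function.Surjective (TensorProduct.mk R k M 1) :=
    TensorProduct.mk_surjective R M k Ideal.Quotient.mk_surjective
  choose f hf using fun i => hsurj (b i)
  refine ⟨_, Fintype.linearCombination R f, ?_, ?_⟩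
  · rw [← LinearMap.range_eq_top, Fintype.range_linearCombination]
    exact span_eq_top_of_tmul_eq_basis f b hf
  · intro v hv i
    have h : ∑ i, residue R (v i) • b i = 0 := by
      have := congrArg (TensorProduct.mk R k M 1) hv
      rw [Fintype.linearCombination_apply, map_sum, map_zero] at this
      rw [← this]
      refine Finset.sum_congr rfl fun i _ => ?_
      rw [map_smul, hf]
      exact algebraMap_smul k (v i) (b i)
    have := Fintype.linearIndependent_iff.1 b.linearIndependent _ h i
    exact (residue_eq_zero_iff _).1 this

/-- A finitely generated module, bundled with its module structure, so that syzygies can be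
defined by recursion. -/
structure FGMod (R : Type u) [CommRing R] where
  carrier : Type u
  [grp : AddCommGroup carrier]
  [mod : Module R carrier]
  [fin : Module.Finite R carrier]

attribute [instance] FGMod.grp FGMod.mod FGMod.fin

section
open IsLocalRing
variable {R : Type u} [CommRing R] [IsLocalRing R]

/-- The minimal number of generators: the rank of the chosen minimal free cover. -/
noncomputable def FGMod.rk (M : FGMod R) : ℕ := (exists_minimal_cover R M.carrier).choose

/-- The chosen minimal free cover. -/
noncomputable def FGMod.cover (M : FGMod R) : (Fin M.rk → R) →ₗ[R] M.carrier :=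
  (exists_minimal_cover R M.carrier).choose_spec.choose

lemma FGMod.cover_surjective (M : FGMod R) : Function.Surjective M.cover :=
  (exists_minimal_cover R M.carrier).choose_spec.choose_spec.1

lemma FGMod.cover_minimal (M : FGMod R) (v) (hv : M.cover v = 0) (i) : v i ∈ maximalIdeal R :=
  (exists_minimal_cover R M.carrier).choose_spec.choose_spec.2 v hv i

variable [IsNoetherianRing R]

/-- The `n`-th syzygy module in the minimal free resolution; the `0`-th one is the module. -/
noncomputable def FGMod.syz (M : FGMod R) : ℕ → FGMod R
  | 0 => M
  | n + 1 => ⟨LinearMap.ker (M.syz n).cover⟩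

/-- The inclusion of the `(n + 1)`-st syzygy into the `n`-th free module. -/
noncomputable def FGMod.incl (M : FGMod R) (n : ℕ) :
    (M.syz (n + 1)).carrier →ₗ[R] (Fin (M.syz n).rk → R) :=
  (LinearMap.ker (M.syz n).cover).subtype

lemma FGMod.incl_injective (M : FGMod R) (n : ℕ) : Function.Injective (M.incl n) :=
  Subtype.val_injective

lemma FGMod.incl_exact (M : FGMod R) (n : ℕ) :
    Function.Exact (M.incl n) (M.syz n).cover := LinearMap.exact_subtype_ker_map _

/-- The differential of the minimal free resolution, from degree `n + 1` to degree `n`. -/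
noncomputable def FGMod.diff (M : FGMod R) (n : ℕ) :
    (Fin (M.syz (n + 1)).rk → R) →ₗ[R] (Fin (M.syz n).rk → R) :=
  M.incl n ∘ₗ (M.syz (n + 1)).cover

lemma FGMod.diff_exact (M : FGMod R) (n : ℕ) : Function.Exact (M.diff (n + 1)) (M.diff n) := by
  intro x
  constructor
  · intro hx
    have : (M.syz (n + 1)).cover x = 0 := M.incl_injective n (by simpa [diff] using hx)
    obtain ⟨y, rfl⟩ := (M.incl_exact (n + 1) x).1 this
    obtain ⟨z, rfl⟩ := (M.syz (n + 2)).cover_surjective y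
    exact ⟨z, rfl⟩
  · rintro ⟨z, rfl⟩
    simp only [diff, LinearMap.comp_apply]
    rw [(M.incl_exact (n + 1)).apply_apply_eq_zero, map_zero]

lemma FGMod.diff_exact_cover (M : FGMod R) (n : ℕ) :
    Function.Exact (M.diff n) (M.syz n).cover := by
  intro x
  rw [M.incl_exact n x]
  constructor
  · rintro ⟨y, rfl⟩
    obtain ⟨z, rfl⟩ := (M.syz (n + 1)).cover_surjective y
    exact ⟨z, rfl⟩
  · rintro ⟨z, rfl⟩
    exact ⟨_, rfl⟩

/-- The vanishing of `Tor_{i+1}(N, M)`, computed with the minimal free resolution of `M`. -/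
def FGMod.TorVanish (M : FGMod R) (N : Type u) [AddCommGroup N] [Module R N] (i : ℕ) : Prop :=
  Function.Exact (LinearMap.lTensor N (M.diff (i + 1))) (LinearMap.lTensor N (M.diff i))

/-- Dimension shifting in the first variable: `Tor_{i+2}(S j, M) = 0` implies
`Tor_{i+1}(S (j + 1), M) = 0`, where `S` are the syzygies of `N`. -/
lemma FGMod.TorVanish.shift {M : FGMod R} (N : FGMod R) {i j : ℕ}
    (h : M.TorVanish (N.syz j).carrier (i + 1)) : M.TorVanish (N.syz (j + 1)).carrier i := by
  let F := Fin (N.syz j).rk → R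
  have comm {A B C D : Type u} [AddCommGroup A] [Module R A] [AddCommGroup B] [Module R B]
      [AddCommGroup C] [Module R C] [AddCommGroup D] [Module R D] (f : A →ₗ[R] B) (g : C →ₗ[R] D)
      (x : A ⊗[R] C) : f.rTensor D (g.lTensor A x) = g.lTensor B (f.rTensor C x) := by
    rw [← LinearMap.comp_apply, ← LinearMap.comp_apply, LinearMap.rTensor_comp_lTensor,
      LinearMap.lTensor_comp_rTensor]
  have hex (n : ℕ) : Function.Exact ((M.diff (n + 1)).lTensor F) ((M.diff n).lTensor F) :=
    Module.Flat.lTensor_exact F (M.diff_exact n)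
  have hzero (P : Type u) [AddCommGroup P] [Module R P] (n : ℕ) (x) :
      (M.diff n).lTensor P ((M.diff (n + 1)).lTensor P x) = 0 := by
    rw [← LinearMap.comp_apply, ← LinearMap.lTensor_comp, (M.diff_exact n).linearMap_comp_eq_zero]
    simp
  have hcol (n : ℕ) : Function.Exact ((N.incl j).rTensor (Fin (M.syz n).rk → R))
      ((N.syz j).cover.rTensor (Fin (M.syz n).rk → R)) :=
    rTensor_exact _ (N.incl_exact j) (N.syz j).cover_surjective
  have hinj (n : ℕ) : Function.Injective ((N.incl j).rTensor (Fin (M.syz n).rk → R)) :=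
    Module.Flat.rTensor_preserves_injective_linearMap _ (N.incl_injective j)
  intro x
  refine ⟨fun hx => ?_, ?_⟩
  -- Diagram chase in the short exact sequence of complexes obtained by tensoring
  -- `0 → S (j + 1) → F → S j → 0` with the minimal free resolution of `M`.
  · obtain ⟨y, hy⟩ := (hex i ((N.incl j).rTensor _ x)).1 (by rw [← comm, hx, map_zero])
    obtain ⟨z', hz'⟩ := (h ((N.syz j).cover.rTensor _ y)).1 (by
      rw [← comm, hy]
      exact (hcol _).apply_apply_eq_zero x)
    obtain ⟨z, rfl⟩ := LinearMap.rTensor_surjective _ (N.syz j).cover_surjective z'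
    obtain ⟨w, hw⟩ := (hcol _ (y - (M.diff (i + 2)).lTensor F z)).1 (by
      rw [map_sub, comm, hz', sub_self])
    refine ⟨w, hinj _ ?_⟩
    rw [comm, hw, map_sub, hzero, sub_zero, hy]
  · rintro ⟨z, rfl⟩
    exact hzero _ i z

/-- As `Tor_{i+1}(N, M)` is `Tor_1(N, -)` of the `i`-th syzygy of `M`, its vanishing makes `N ⊗ -`
preserve injectivity of the inclusion of the next syzygy. -/
lemma FGMod.TorVanish.injective {M : FGMod R} {N : Type u} [AddCommGroup N] [Module R N] {i : ℕ}
    (h : M.TorVanish N i) : Function.Injective ((M.incl i).lTensor N) := by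
  rw [injective_iff_map_eq_zero]
  intro x hx
  obtain ⟨y, rfl⟩ := LinearMap.lTensor_surjective N (M.syz (i + 1)).cover_surjective x
  obtain ⟨z, rfl⟩ := (h y).1 (by rw [diff, LinearMap.lTensor_comp]; exact hx)
  exact (lTensor_exact N (M.diff_exact_cover (i + 1))
    (M.syz (i + 1)).cover_surjective).apply_apply_eq_zero z

omit [IsNoetherianRing R] in
lemma FGMod.rk_eq_zero (M : FGMod R) [Subsingleton M.carrier] : M.rk = 0 := by
  by_contra h
  have := M.cover_minimal (fun _ => 1) (Subsingleton.elim _ _) ⟨0, Nat.pos_of_ne_zero h⟩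
  exact (maximalIdeal.isMaximal R).ne_top ((Ideal.eq_top_iff_one _).2 this)

lemma FGMod.incl_mem (M : FGMod R) (n : ℕ) (x : (M.syz (n + 1)).carrier) (i) :
    M.incl n x i ∈ maximalIdeal R :=
  (M.syz n).cover_minimal _ ((M.incl_exact n).apply_apply_eq_zero x) i

/-- If `m ^ 3 = 0` and `N` is the `(n + 1)`-st syzygy of `M`, with
`Tor_{n+1}(N, M) = Tor_{n+2}(N, M) = 0`, then `N = 0`. -/
lemma FGMod.subsingleton_syz (hm3 : (maximalIdeal R) ^ 3 = ⊥) (M : FGMod R) (n : ℕ)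
    (h1 : M.TorVanish (M.syz (n + 1)).carrier n)
    (h2 : M.TorVanish (M.syz (n + 1)).carrier (n + 1)) :
    Subsingleton (M.syz (n + 1)).carrier := by
  have hsq : ∀ x ∈ (maximalIdeal R) ^ 2, ∀ w : (M.syz (n + 1)).carrier, x • w = 0 := by
    intro x hx w
    apply M.incl_injective n
    ext i
    have : x * M.incl n w i ∈ (maximalIdeal R) ^ 3 := by
      rw [pow_succ]
      exact Ideal.mul_mem_mul hx (M.incl_mem n w i)
    rw [hm3] at this
    simpa using this
  -- For `N` this syzygy, `N ⊗ N` embeds into `N ⊗ F n` with image in `m (N ⊗ F n)`, and `m` kills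
  -- that since `m ^ 2 N = 0`.
  have hMM : ∀ x ∈ maximalIdeal R, ∀ u v : (M.syz (n + 1)).carrier,
      (x • u) ⊗ₜ[R] v = (0 : (M.syz (n + 1)).carrier ⊗[R] (M.syz (n + 1)).carrier) := by
    intro x hx u v
    apply h1.injective
    have hv : M.incl n v = ∑ i, M.incl n v i • (Pi.single i (1 : R) : Fin _ → R) := by
      ext k; simp [Finset.sum_apply, Pi.single_apply]
    rw [LinearMap.lTensor_tmul, hv, map_zero, TensorProduct.tmul_sum]
    refine Finset.sum_eq_zero fun i _ => ?_
    rw [TensorProduct.tmul_smul, TensorProduct.smul_tmul', smul_smul, hsq, TensorProduct.zero_tmul]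
    rw [pow_two]
    exact Ideal.mul_mem_mul (M.incl_mem n v i) hx
  rcases eq_zero_or_maximalIdeal_eq_bot hm3 (M.syz (n + 1)).cover (M.syz (n + 1)).cover_surjective
    (M.syz (n + 1)).cover_minimal hsq hMM h2.injective with h | h
  · have : IsEmpty (Fin (M.syz (n + 1)).rk) := by rw [h]; infer_instance
    exact (M.syz (n + 1)).cover_surjective.subsingleton
  · refine subsingleton_of_forall_eq 0 fun x => M.incl_injective n ?_
    ext i
    have := M.incl_mem n x i
    rw [h] at this
    simpa using this

lemma FGMod.subsingleton_syz_of_le (M : FGMod R) {n m : ℕ} (hnm : n ≤ m)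
    (h : Subsingleton (M.syz n).carrier) : Subsingleton (M.syz m).carrier := by
  induction m, hnm using Nat.le_induction with
  | base => exact h
  | succ m _ ih =>
    have : IsEmpty (Fin (M.syz m).rk) := by rw [(M.syz m).rk_eq_zero]; infer_instance
    exact (M.incl_injective m).subsingleton

end

/-! ### Derived functors from an exact sequence of projective modules -/

section

variable {R : Type u} [CommRing R] (M : ModuleCat.{u} R) (X : ℕ → Type u)
  [∀ n, AddCommGroup (X n)] [∀ n, Module R (X n)] [∀ n, Module.Projective R (X n)]
  (d : ∀ n, X (n + 1) →ₗ[R] X n) (ε : X 0 →ₗ[R] M)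
  (hd : ∀ n, Function.Exact (d (n + 1)) (d n)) (h0 : Function.Exact (d 0) ε)
  (hε : Function.Surjective ε)

include hd in
omit [∀ n, Module.Projective R (X n)] in
lemma ofHom_comp_ofHom_eq_zero (n : ℕ) :
    ModuleCat.ofHom (d (n + 1)) ≫ ModuleCat.ofHom (d n) = 0 := by
  rw [← ModuleCat.ofHom_comp, (hd n).linearMap_comp_eq_zero]; rfl

/-- The chain complex of `R`-modules with terms `X n` and differentials `d n`. -/
abbrev linComplex : ChainComplex (ModuleCat.{u} R) ℕ :=
  ChainComplex.of (fun n => ModuleCat.of R (X n)) (fun n => ModuleCat.ofHom (d n))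
    (ofHom_comp_ofHom_eq_zero X d hd)

omit [∀ n, Module.Projective R (X n)] in
lemma linComplex_d (n : ℕ) : (linComplex X d hd).d (n + 1) n = ModuleCat.ofHom (d n) := by simp

include h0 hε hd in
/-- An exact sequence `⋯ → X 1 → X 0 → M → 0` with all `X n` projective is a projective resolution
of `M`. -/
lemma exists_resolution :
    ∃ P : ProjectiveResolution M, P.complex = linComplex X d hd := by
  have hC := linComplex_d X d hd
  set C := linComplex X d hd
  refine ⟨{ complex := C
            projective := fun n => ?_
            π := (ChainComplex.toSingle₀Equiv _ _).symm ⟨ModuleCat.ofHom ε, ?_⟩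
            quasiIso := ⟨fun n => ?_⟩ }, rfl⟩
  · change Projective (ModuleCat.of R (X n))
    infer_instance
  · rw [hC 0, ← ModuleCat.ofHom_comp, h0.linearMap_comp_eq_zero]; rfl
  · cases n with
    | zero =>
      rw [ChainComplex.quasiIsoAt₀_iff, ShortComplex.quasiIso_iff_of_zeros' _ rfl rfl rfl]
      constructor
      · rw [ShortComplex.moduleCat_exact_iff]
        intro x hx
        have hx' : ε x = 0 := by simpa using! hx
        obtain ⟨y, rfl⟩ := (h0 x).1 hx'
        refine ⟨y, ?_⟩
        change (C.d 1 0).hom y = _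
        rw [hC 0]; rfl
      · rw [ModuleCat.epi_iff_surjective]
        intro x
        obtain ⟨y, rfl⟩ := hε x
        refine ⟨y, ?_⟩
        simp
        rfl
    | succ n =>
      rw [quasiIsoAt_iff_exactAt' (hL := ChainComplex.exactAt_succ_single_obj ..),
          HomologicalComplex.exactAt_iff' _ (n + 2) (n + 1) n (by simp) (by simp),
          ShortComplex.moduleCat_exact_iff]
      intro x hx
      change (C.d (n + 1) n).hom x = 0 at hx
      rw [hC] at hx
      obtain ⟨y, rfl⟩ := (hd n x).1 hx
      refine ⟨y, ?_⟩
      change (C.d (n + 2) (n + 1)).hom y = _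
      rw [hC]; rfl


open MonoidalCategory in
include h0 hε hd in
lemma exact_of_isZero_tor (N : ModuleCat.{u} R) (i : ℕ)
    (h : IsZero (((Tor (ModuleCat.{u} R) (i + 1)).obj N).obj M)) :
    Function.Exact ((d (i + 1)).lTensor N) ((d i).lTensor N) := by
  obtain ⟨P, hP⟩ := exists_resolution M X d ε hd h0 hε
  have h' := h.of_iso (P.isoLeftDerivedObj ((tensoringLeft (ModuleCat.{u} R)).obj N) (i + 1)).symm
  rw [hP] at h'
  replace h' := (HomologicalComplex.exactAt_iff_isZero_homology _ _).2 h'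
  rw [HomologicalComplex.exactAt_iff' _ (i + 2) (i + 1) i (by simp) (by simp),
    ShortComplex.moduleCat_exact_iff] at h'
  have hmap (n : ℕ) (x) :
      ((((tensoringLeft (ModuleCat.{u} R)).obj N).mapHomologicalComplex _).obj
        (linComplex X d hd)).d (n + 1) n x = (d n).lTensor N x := by
    rw [Functor.mapHomologicalComplex_obj_d, linComplex_d]
    rfl
  intro x
  constructor
  · intro hx
    obtain ⟨y, hy⟩ := h' x ((hmap i x).trans hx)
    exact ⟨y, (hmap (i + 1) y).symm.trans hy⟩
  · rintro ⟨y, rfl⟩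
    rw [← LinearMap.comp_apply, ← LinearMap.lTensor_comp, (hd i).linearMap_comp_eq_zero]
    simp

include h0 hε hd in
lemma isZero_ext_of_subsingleton (N : ModuleCat.{u} R) (i : ℕ) [Subsingleton (X i)] :
    IsZero (((Ext R (ModuleCat.{u} R) i).obj (Opposite.op M)).obj N) := by
  obtain ⟨P, hP⟩ := exists_resolution M X d ε hd h0 hε
  refine IsZero.of_iso ?_ (P.isoExt i N)
  rw [hP, ← HomologicalComplex.exactAt_iff_isZero_homology, HomologicalComplex.exactAt_iff]
  refine ShortComplex.exact_of_isZero_X₂ _ ?_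
  rw [IsZero.iff_id_eq_zero]
  ext (x : _ ⟶ _)
  have hz : IsZero (ModuleCat.of R (X i)) := ModuleCat.isZero_of_subsingleton _
  obtain rfl : x = 0 := hz.eq_of_src _ _
  rfl
end

theorem stmt_0 (R : Type u) [CommRing R] [IsNoetherianRing R] [IsLocalRing R]
    (hm3 : (IsLocalRing.maximalIdeal R) ^ 3 = ⊥)
    (M : Type u) [AddCommGroup M] [Module R M] [Module.Finite R M]
    (htor : ∃ n₀ : ℕ, ∀ i : ℕ, n₀ ≤ i →
      IsZero (((Tor (ModuleCat.{u} R) i).obj (ModuleCat.of R M)).obj (ModuleCat.of R M))) :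
    HasFiniteProjectiveDimension R M := by
  obtain ⟨n₀, h0⟩ := htor
  let S : FGMod R := ⟨M⟩
  have hvan : ∀ j i, n₀ ≤ i + j + 1 → S.TorVanish (S.syz j).carrier i := by
    intro j
    induction j with
    | zero =>
      intro i hi
      exact exact_of_isZero_tor (ModuleCat.of R M) (fun n => Fin (S.syz n).rk → R) S.diff
        (S.syz 0).cover S.diff_exact (S.diff_exact_cover 0) (S.syz 0).cover_surjective
        (ModuleCat.of R M) i (h0 _ (by omega))
    | succ j ih => exact fun i hi => (ih (i + 1) (by omega)).shift
  have hsub : Subsingleton (S.syz (n₀ + 1)).carrier :=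
    S.subsingleton_syz hm3 n₀ (hvan _ _ (by omega)) (hvan _ _ (by omega))
  refine ⟨n₀, fun N i hi => ?_⟩
  have := S.subsingleton_syz_of_le hi hsub
  have : IsEmpty (Fin (S.syz i).rk) := by rw [(S.syz i).rk_eq_zero]; infer_instance
  exact isZero_ext_of_subsingleton (ModuleCat.of R M) (fun n => Fin (S.syz n).rk → R) S.diff
    (S.syz 0).cover S.diff_exact (S.diff_exact_cover 0) (S.syz 0).cover_surjective N i
end

section
/- Let R be a positively graded Noetherian algebra over a field k with char k != 2, and let M be a finitely generated graded R-module with Tor_i^R(M, M) = 0 for all i > 0. Then the Hilbert series of the second symmetric power satisfies H_{S^2_R(M)}(t) = H_M(t)^2 / (2 H_R(t)) + H_R(t) H_M(t^2) / (2 H_R(t^2)). -/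
/-!
Write `X_ε` for the `ε`-eigenspace, `ε = ±1`, of the swap on a tensor square. As `2` is invertible,
`S²_R(M)` is the space `(M ⊗ M)_1` of symmetric tensors. The more symmetric statement to prove is

`2 H_{(M ⊗ M)_ε}(t) = H_M(t)² / H_R(t) + ε H_R(t) H_M(t²) / H_R(t²)`,

and `defect` is the difference of its two sides, cleared of denominators. For a free module
`F = R ⊗_k V` the formula holds, because `F ⊗_R F = R ⊗ V ⊗ V` and the swap permutes the products of
the elements of a homogeneous basis of `V` (`finrank_symPart_free`).

In general let `N` be the kernel of the canonical cover `F = R ⊗_k M → M`. The vanishing of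
`Tor₁(M, M)` and `Tor₁(M, N)` gives an exact sequence
`0 → (N ⊗ N)_{-ε} → N ⊗ F → (F ⊗ F)_ε → (M ⊗ M)_ε → 0` (`finrank_symPart_syzygy`), in which the
Hilbert series of the two middle terms are known. It follows that the defect of `M` for `ε` is the
defect of `N` for `-ε` (`defect_eq`). Moreover `N` inherits the hypothesis on `Tor` from `M`
(`TorClass.syzygy`), and as `R_0 = k` it lives in strictly larger degrees than `M` (`kerGr_low`).
Iterating, the defect of `M` is divisible by every power of `t`, so it is zero (`defect_eq_zero`).
No minimality of resolutions, and no Euler characteristic of an infinite complex, is needed.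

The higher `Tor` enter only through syzygies: `TorOneZero` expresses `Tor₁ = 0` by flat covers,
and `exists_torClass` translates the hypothesis on `Tor` into this language. A grading is handled
through its family of projections (`GrMod`), which restricts well to kernels and tensor products.
-/

/-!
STATEMENT 2: Let R be a positively graded Noetherian algebra over a field k with char k ≠ 2
(and R_0 = k), and let M be a finitely generated graded R-module with Tor_i^R(M, M) = 0 for
all i > 0. Then the Hilbert series of the second symmetric power satisfies
H_{S²_R(M)}(t) = H_M(t)^2 / (2 H_R(t)) + H_R(t) H_M(t²) / (2 H_R(t²)).

`S²_R(M)` is realized as the cokernel of the antisymmetrization map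
ι_M : Λ²_R(M) → M ⊗_R M, x ∧ y ↦ x ⊗ y − y ⊗ x, where `Λ²_R(M) = (M ⊗[R] M)/⟨x ⊗ x⟩`.
Its grading is formalized by quantifying over any direct sum decomposition compatible with
the grading of `M` (such a decomposition is necessarily the canonical one). Hilbert series
live in `ℚ⟦t⟧`, where `H_R(t)` and `H_R(t²)` are invertible (constant term `1` since
`R_0 = k`), so division is expressed by `⁻¹`.
-/

open CategoryTheory Limits TensorProduct DirectSum

universe u

/-- The Hilbert series of a graded vector space: `H(t) = Σ_n dim_k 𝒩_n t^n`. -/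
noncomputable def hilbertSeries {k A : Type u} [Field k] [AddCommGroup A] [Module k A]
    (𝒩 : ℕ → Submodule k A) : PowerSeries ℚ :=
  PowerSeries.mk fun n => (Module.finrank k (𝒩 n) : ℚ)

/-- The Hilbert series with `t` replaced by `t²`: `H(t²) = Σ_n dim_k 𝒩_n t^{2n}`. -/
noncomputable def hilbertSeriesSq {k A : Type u} [Field k] [AddCommGroup A] [Module k A]
    (𝒩 : ℕ → Submodule k A) : PowerSeries ℚ :=
  PowerSeries.mk fun n => if 2 ∣ n then (Module.finrank k (𝒩 (n / 2)) : ℚ) else 0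

variable (R : Type u) [CommRing R] (M : Type u) [AddCommGroup M] [Module R M]

/-- The submodule of `M ⊗[R] M` generated by the squares `x ⊗ x`. -/
noncomputable def wedgeRel : Submodule R (M ⊗[R] M) :=
  Submodule.span R {z | ∃ x : M, z = x ⊗ₜ[R] x}

/-- The second exterior power `Λ²_R(M)`, realized as `(M ⊗[R] M) / ⟨x ⊗ x⟩`.
The class of `x ⊗ y` is the elementary wedge `x ∧ y`. -/
noncomputable abbrev ExteriorSquare : Type u := (M ⊗[R] M) ⧸ wedgeRel R M

/-- `x ⊗ y ↦ x ⊗ y - y ⊗ x` as an endomorphism of `M ⊗[R] M`. -/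
noncomputable def antisymAux : M ⊗[R] M →ₗ[R] M ⊗[R] M :=
  LinearMap.id - (TensorProduct.comm R M M).toLinearMap

lemma wedgeRel_le_ker : wedgeRel R M ≤ LinearMap.ker (antisymAux R M) := by
  rw [wedgeRel, Submodule.span_le]
  rintro z ⟨x, rfl⟩
  simp [antisymAux]

/-- The antisymmetrization map `ι_M : Λ²_R(M) → M ⊗_R M`, `x ∧ y ↦ x ⊗ y - y ⊗ x`. -/
noncomputable def antisymmetrization : ExteriorSquare R M →ₗ[R] M ⊗[R] M :=
  Submodule.liftQ (wedgeRel R M) (antisymAux R M) (wedgeRel_le_ker R M)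

/-- The second symmetric power `S²_R(M)`, realized as the cokernel of the
antisymmetrization map `ι_M`. -/
noncomputable abbrev SymmetricSquare : Type u :=
  (M ⊗[R] M) ⧸ LinearMap.range (antisymmetrization R M)

section Auxiliary

open Function LinearMap

set_option linter.unusedSectionVars false

/-! ### Tor-vanishing without derived functors -/

/-- `TorOneZero A Q P` expresses `Tor₁(Q, P) = 0`: for every flat cover `F → Q`, the first syzygy
stays injective in `F` after tensoring with `P`. -/
def TorOneZero (A : Type u) [CommRing A] (Q P : Type u) [AddCommGroup Q] [Module A Q]
    [AddCommGroup P] [Module A P] : Prop :=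
  ∀ (F : Type u) [AddCommGroup F] [Module A F] [Module.Flat A F] (f : F →ₗ[A] Q),
    Surjective f → Injective ((ker f).subtype.rTensor P)

section TorOne
variable {A : Type u} [CommRing A] {Q P F G : Type u} [AddCommGroup Q] [Module A Q]
    [AddCommGroup P] [Module A P] [AddCommGroup F] [Module A F]
    [AddCommGroup G] [Module A G]

/-- If `K = ker f` is a syzygy of `Q` with `K ⊗ P → F ⊗ P` injective, then every syzygy `L = ker g` of
`P` has `L ⊗ Q → G ⊗ Q` injective, by a diagram chase using the flatness of `F` only. -/
lemma torOne_symm_aux [Module.Flat A F] (f : F →ₗ[A] Q) (hf : Surjective f)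
    (g : G →ₗ[A] P) (hg : Surjective g)
    (h : Injective ((ker f).subtype.rTensor P)) : Injective ((ker g).subtype.rTensor Q) := by
  rw [← LinearMap.lTensor_inj_iff_rTensor_inj] at h
  rw [injective_iff_map_eq_zero]
  intro x hx
  obtain ⟨y, rfl⟩ := lTensor_surjective (ker g) hf x
  have h1 : (f.lTensor G) ((ker g).subtype.rTensor F y) = 0 := by
    rw [← hx, ← LinearMap.comp_apply, lTensor_comp_rTensor, ← rTensor_comp_lTensor,
      LinearMap.comp_apply]
  obtain ⟨w, hw⟩ := (lTensor_exact G (exact_subtype_ker_map f) hf _).1 h1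
  have h2 : (g.rTensor (ker f)) w = 0 := by
    apply h
    rw [map_zero, ← LinearMap.comp_apply, lTensor_comp_rTensor, ← rTensor_comp_lTensor, LinearMap.comp_apply, hw]
    exact (rTensor_exact F (exact_subtype_ker_map g) hg).apply_apply_eq_zero y
  obtain ⟨v, rfl⟩ := (rTensor_exact (ker f) (exact_subtype_ker_map g) hg _).1 h2
  have h3 : y = ((ker f).subtype.lTensor (ker g)) v := by
    apply Module.Flat.rTensor_preserves_injective_linearMap (M := F) (ker g).subtype
      (Submodule.subtype_injective _)
    rw [← hw, ← LinearMap.comp_apply, lTensor_comp_rTensor, ← rTensor_comp_lTensor,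
      LinearMap.comp_apply]
  rw [h3]
  exact (lTensor_exact (ker g) (exact_subtype_ker_map f) hf).apply_apply_eq_zero v

/-- `Tor₁` can be computed from any flat cover of either argument. -/
lemma TorOneZero.of_cover [Module.Flat A F] (f : F →ₗ[A] Q) (hf : Surjective f)
    (h : Injective ((ker f).subtype.rTensor P)) : TorOneZero A P Q :=
  fun _ _ _ _ g hg => torOne_symm_aux f hf g hg h

variable (A Q) in
lemma exists_flat_cover : ∃ (F : Type u) (_ : AddCommGroup F) (_ : Module A F)
    (_ : Module.Flat A F) (f : F →ₗ[A] Q), Surjective f :=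
  ⟨Q →₀ A, inferInstance, inferInstance, inferInstance, Finsupp.linearCombination A id,
    Finsupp.linearCombination_id_surjective A Q⟩

lemma TorOneZero.symm (h : TorOneZero A Q P) : TorOneZero A P Q := by
  obtain ⟨F, _, _, _, f, hf⟩ := exists_flat_cover A Q
  exact .of_cover f hf (h F f hf)

/-- Dimension shifting: `Tor₁(K, P) = 0` implies `Tor₁(Q, N) = 0` for syzygies `K` of `Q` and
`N` of `P`; both are `Tor₂(Q, P) = 0`. -/
lemma TorOneZero.shift [Module.Flat A F] [Module.Flat A G] (f : F →ₗ[A] Q) (hf : Surjective f)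
    (g : G →ₗ[A] P) (hg : Surjective g) (h : TorOneZero A (ker f) P) :
    TorOneZero A Q (ker g) := by
  refine TorOneZero.symm (.of_cover f hf ?_)
  rw [← LinearMap.lTensor_inj_iff_rTensor_inj]
  have h1 := h.symm G g hg
  have h2 := (Module.Flat.lTensor_preserves_injective_linearMap (M := G) (ker f).subtype
      (Submodule.subtype_injective _)).comp h1
  rw [← coe_comp, lTensor_comp_rTensor, ← rTensor_comp_lTensor, coe_comp] at h2
  exact h2.of_comp

end TorOne

/-- `TorClass A M C`: the class `C` of modules contains `M`, is closed under flat syzygies, and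
`Tor₁(M, P) = 0` for all `P` in `C`. This property is inherited by the syzygies of `M`, and holds
for a suitable `C` as soon as `Torᵢ(M, M) = 0` for all `i > 0`. -/
structure TorClass (A : Type u) [CommRing A] (C : ModuleCat.{u} A → Prop)
    (M : Type u) [AddCommGroup M] [Module A M] : Prop where
  mem : C (ModuleCat.of A M)
  closed : ∀ (P G : Type u) [AddCommGroup P] [Module A P] [AddCommGroup G] [Module A G]
    [Module.Flat A G] (g : G →ₗ[A] P), Surjective g → C (ModuleCat.of A P) →
    C (ModuleCat.of A (ker g))
  tor : ∀ (P : Type u) [AddCommGroup P] [Module A P], C (ModuleCat.of A P) → TorOneZero A M P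

lemma TorClass.syzygy {A : Type u} [CommRing A] {C : ModuleCat.{u} A → Prop} {M F : Type u}
    [AddCommGroup M] [Module A M] [AddCommGroup F] [Module A F] [Module.Flat A F]
    (h : TorClass A C M) (f : F →ₗ[A] M) (hf : Surjective f) : TorClass A C (ker f) where
  mem := h.closed M F f hf h.mem
  closed := h.closed
  tor P _ _ hP := by
    obtain ⟨G, _, _, _, g, hg⟩ := exists_flat_cover A P
    exact (TorOneZero.shift g hg f hf (h.tor _ (h.closed P G g hg hP)).symm).symm

/-- For `X → Y → Z → W` exact, exactness of `M ⊗ X → M ⊗ Y → M ⊗ Z` in the middle says that the image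
`ker c` of `Y` in `Z` stays injective after tensoring with `M`. -/
lemma lTensor_subtype_ker_injective {A : Type u} [CommRing A] {M X Y Z W : Type u}
    [AddCommGroup M] [Module A M] [AddCommGroup X] [Module A X] [AddCommGroup Y] [Module A Y]
    [AddCommGroup Z] [Module A Z] [AddCommGroup W] [Module A W]
    (a : X →ₗ[A] Y) (b : Y →ₗ[A] Z) (c : Z →ₗ[A] W) (hab : Exact a b) (hbc : Exact b c)
    (hM : Exact (a.lTensor M) (b.lTensor M)) : Injective ((ker c).subtype.lTensor M) := by
  let b' : Y →ₗ[A] ker c := b.codRestrict (ker c) fun y => hbc.apply_apply_eq_zero y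
  have hb' : Surjective b' := fun z => by
    obtain ⟨y, hy⟩ := (hbc z.1).1 z.2
    exact ⟨y, Subtype.ext hy⟩
  have hb : (ker c).subtype ∘ₗ b' = b := rfl
  rw [injective_iff_map_eq_zero]
  intro x hx
  obtain ⟨y, rfl⟩ := lTensor_surjective M hb' x
  rw [← LinearMap.comp_apply, ← lTensor_comp, hb] at hx
  obtain ⟨w, rfl⟩ := (hM y).1 hx
  have h0 : b' ∘ₗ a = 0 := by
    ext z
    exact hab.apply_apply_eq_zero z
  rw [← LinearMap.comp_apply, ← lTensor_comp, h0, lTensor_zero, LinearMap.zero_apply]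

/-- If `Torᵢ(M, M) = 0` for all `i > 0`, then `M` lies in a suitable class: the modules `P` with
`Tor₁(K, P) = 0` for `M` itself and for all the syzygies `K` of `M` in a fixed projective resolution. -/
lemma exists_torClass {A : Type u} [CommRing A] {M : Type u} [AddCommGroup M] [Module A M]
    (htor : ∀ i : ℕ, 0 < i →
      IsZero (((Tor (ModuleCat.{u} A) i).obj (ModuleCat.of A M)).obj (ModuleCat.of A M))) :
    ∃ C, TorClass A C M := by
  obtain ⟨S⟩ := (inferInstance : HasProjectiveResolution (ModuleCat.of A M)).out
  let X : ℕ → Type u := fun i => S.complex.X i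
  let d : ∀ i, X (i + 1) →ₗ[A] X i := fun i => (S.complex.d (i + 1) i).hom
  have hflat : ∀ i, Module.Flat A (X i) := fun i => by
    have := (IsProjective.iff_projective (R := A) (S.complex.X i)).2 (S.projective i)
    infer_instance
  let π : X 0 →ₗ[A] M := (S.π.f 0).hom
  have hπ : Surjective π := (ModuleCat.epi_iff_surjective (S.π.f 0)).1 inferInstance
  have hd : ∀ i, Exact (d (i + 1)) (d i) := fun i =>
    (ShortComplex.ShortExact.moduleCat_exact_iff_function_exact _).1 (S.exact_succ i)
  have hd0 : Exact (d 0) π :=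
    (ShortComplex.ShortExact.moduleCat_exact_iff_function_exact _).1 (S.exact₀)
  have hM : ∀ i, Exact ((d (i + 1)).lTensor M) ((d i).lTensor M) := fun i => by
    have h1 := (htor (i + 1) i.succ_pos).of_iso (S.isoLeftDerivedObj
      ((MonoidalCategory.tensoringLeft (ModuleCat.{u} A)).obj (ModuleCat.of A M)) (i + 1)).symm
    have h2 := (HomologicalComplex.exactAt_iff' _ (i + 2) (i + 1) i (by simp) (by simp)).1
      ((HomologicalComplex.exactAt_iff_isZero_homology _ _).2 h1)
    exact (ShortComplex.ShortExact.moduleCat_exact_iff_function_exact _).1 h2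
  have hX : ∀ i, Injective ((ker (d i)).subtype.rTensor M) := fun i => by
    rw [← LinearMap.lTensor_inj_iff_rTensor_inj]
    exact lTensor_subtype_ker_injective _ _ _ (hd (i + 1)) (hd i) (hM (i + 1))
  have hX0 : Injective ((ker π).subtype.rTensor M) := by
    rw [← LinearMap.lTensor_inj_iff_rTensor_inj]
    exact lTensor_subtype_ker_injective _ _ _ (hd 0) hd0 (hM 0)
  let e0 : X 1 →ₗ[A] ker π := (d 0).codRestrict _ fun y => hd0.apply_apply_eq_zero y
  let e : ∀ i, X (i + 2) →ₗ[A] ker (d i) := fun i =>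
    (d (i + 1)).codRestrict _ fun y => (hd i).apply_apply_eq_zero y
  have he0 : Surjective e0 := fun z => by
    obtain ⟨y, hy⟩ := (hd0 z.1).1 z.2
    exact ⟨y, Subtype.ext hy⟩
  have he : ∀ i, Surjective (e i) := fun i z => by
    obtain ⟨y, hy⟩ := (hd i z.1).1 z.2
    exact ⟨y, Subtype.ext hy⟩
  have hke0 : ker e0 = ker (d 0) := ker_codRestrict _ _ _
  have hke : ∀ i, ker (e i) = ker (d (i + 1)) := fun i => ker_codRestrict _ _ _
  -- `M`, `ker π` and the `ker (d i)` are the successive syzygies of `M`.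
  refine ⟨fun P => TorOneZero A M P ∧ TorOneZero A (ker π) P ∧ ∀ i, TorOneZero A (ker (d i)) P,
    ⟨?_, ?_, ?_⟩, ?_, fun P _ _ hP => hP.1⟩
  · exact .of_cover π hπ hX0
  · exact (TorOneZero.of_cover e0 he0 (by rw [hke0]; exact hX 0)).symm
  · exact fun i => (TorOneZero.of_cover (e i) (he i) (by rw [hke]; exact hX (i + 1))).symm
  · rintro P G _ _ _ _ _ g hg ⟨h1, h2, h3⟩
    refine ⟨.shift π hπ g hg h2, .shift e0 he0 g hg ?_, fun i => .shift (e i) (he i) g hg ?_⟩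
    · rw [hke0]; exact h3 0
    · rw [hke]; exact h3 (i + 1)

/-! ### Graded projections and symmetric parts -/

section Fix
variable {k V W : Type u} [Field k] [AddCommGroup V] [Module k V] [AddCommGroup W] [Module k W]

/-- The subspace fixed by an endomorphism `e`; it is the range of `e` when `e` is idempotent. -/
def fixSub (e : V →ₗ[k] V) : Submodule k V := LinearMap.eqLocus e LinearMap.id

@[simp] lemma mem_fixSub {e : V →ₗ[k] V} {x : V} : x ∈ fixSub e ↔ e x = x := Iff.rfl

/-- Additivity of dimension along an exact sequence `0 → S → T → U → Z → 0` of subspaces. -/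
lemma finrank_four {V₁ V₂ V₃ V₄ : Type u} [AddCommGroup V₁] [Module k V₁] [AddCommGroup V₂]
    [Module k V₂] [AddCommGroup V₃] [Module k V₃] [AddCommGroup V₄] [Module k V₄]
    (a : V₁ →ₗ[k] V₂) (b : V₂ →ₗ[k] V₃) (c : V₃ →ₗ[k] V₄)
    (S : Submodule k V₁) (T : Submodule k V₂) (U : Submodule k V₃) (Z : Submodule k V₄)
    [FiniteDimensional k T] [FiniteDimensional k U]
    (ha : ∀ x ∈ S, a x ∈ T) (hb : ∀ x ∈ T, b x ∈ U) (hc : ∀ x ∈ U, c x ∈ Z)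
    (h1 : ∀ x ∈ S, a x = 0 → x = 0)
    (h2 : ∀ x ∈ S, b (a x) = 0) (h2' : ∀ y ∈ T, b y = 0 → ∃ x ∈ S, a x = y)
    (h3 : ∀ x ∈ T, c (b x) = 0) (h3' : ∀ y ∈ U, c y = 0 → ∃ x ∈ T, b x = y)
    (h4 : ∀ z ∈ Z, ∃ y ∈ U, c y = z) :
    Module.finrank k Z + Module.finrank k T = Module.finrank k U + Module.finrank k S := by
  let a' := a.restrict ha
  let b' := b.restrict hb
  let c' := c.restrict hc
  have e1 : Module.finrank k (range a') = Module.finrank k S := by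
    apply finrank_range_of_inj
    rw [injective_iff_map_eq_zero]
    intro x hx
    exact Subtype.ext (h1 x x.2 (congrArg Subtype.val hx))
  have e2 : ker b' = range a' := by
    ext y
    constructor
    · intro hy
      obtain ⟨x, hx, hxy⟩ := h2' y y.2 (congrArg Subtype.val hy)
      exact ⟨⟨x, hx⟩, Subtype.ext hxy⟩
    · rintro ⟨x, rfl⟩
      exact Subtype.ext (h2 x x.2)
  have e3 : ker c' = range b' := by
    ext y
    constructor
    · intro hy
      obtain ⟨x, hx, hxy⟩ := h3' y y.2 (congrArg Subtype.val hy)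
      exact ⟨⟨x, hx⟩, Subtype.ext hxy⟩
    · rintro ⟨x, rfl⟩
      exact Subtype.ext (h3 x x.2)
  have e4 : range c' = ⊤ := by
    rw [range_eq_top]
    intro z
    obtain ⟨y, hy, hyz⟩ := h4 z z.2
    exact ⟨⟨y, hy⟩, Subtype.ext hyz⟩
  have f1 := finrank_range_add_finrank_ker b'
  have f2 := finrank_range_add_finrank_ker c'
  rw [e4, finrank_top] at f2
  rw [e2, e1] at f1
  rw [e3] at f2
  omega

/-- A linear equivalence intertwining two conditions preserves the dimension. -/
lemma finrank_congr (e : V ≃ₗ[k] W) (S : Submodule k V) (T : Submodule k W)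
    (h : ∀ x, x ∈ S ↔ e x ∈ T) : Module.finrank k S = Module.finrank k T := by
  have : T = S.map (e : V →ₗ[k] W) := by
    ext y
    constructor
    · intro hy
      exact ⟨e.symm y, (h _).2 (by simpa using hy), by simp⟩
    · rintro ⟨x, hx, rfl⟩
      exact (h x).1 hx
  rw [this]
  exact (LinearEquiv.finrank_map_eq e S).symm

end Fix

section Orth
variable {k V W : Type u} [Field k] [AddCommGroup V] [Module k V] [AddCommGroup W] [Module k W]

/-- A family of pairwise orthogonal idempotents of finite rank, thought of as the projections of
`V` onto its graded pieces `fixSub (p n)`. It is not required that `V` be the sum of these. -/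
structure OrthFam (p : ℕ → V →ₗ[k] V) : Prop where
  orth : ∀ i j x, p i (p j x) = if i = j then p j x else 0
  fin : ∀ n, FiniteDimensional k (fixSub (p n))

lemma OrthFam.idem {p : ℕ → V →ₗ[k] V} (hp : OrthFam p) (i : ℕ) (x : V) :
    p i (p i x) = p i x := by
  rw [hp.orth, if_pos rfl]

lemma OrthFam.antidiagonal_ne {n : ℕ} {a b : ℕ × ℕ}
    (ha : a ∈ Finset.HasAntidiagonal.antidiagonal n)
    (hb : b ∈ Finset.HasAntidiagonal.antidiagonal n) (hne : a ≠ b) : a.1 ≠ b.1 := by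
  intro h
  apply hne
  simp only [Finset.HasAntidiagonal.mem_antidiagonal] at ha hb
  ext <;> omega

/-- The projection of `V ⊗[k] W` onto its degree `n` part, for vector spaces over `k`. -/
noncomputable def kTensorGr (p : ℕ → V →ₗ[k] V) (p' : ℕ → W →ₗ[k] W) (n : ℕ) :
    V ⊗[k] W →ₗ[k] V ⊗[k] W :=
  ∑ ij ∈ Finset.HasAntidiagonal.antidiagonal n, TensorProduct.map (p ij.1) (p' ij.2)

lemma kTensorGr_tmul (p : ℕ → V →ₗ[k] V) (p' : ℕ → W →ₗ[k] W) (n : ℕ) (x : V) (y : W) :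
    kTensorGr p p' n (x ⊗ₜ y) =
      ∑ ij ∈ Finset.HasAntidiagonal.antidiagonal n, p ij.1 x ⊗ₜ[k] p' ij.2 y := by
  simp [kTensorGr]

/-- The degree `n` part of `V ⊗[k] W` is a finite sum of the images of the finite-dimensional spaces
`Vᵢ ⊗[k] Wⱼ`, `i + j = n`. -/
lemma kTensorGr_range_fin {p : ℕ → V →ₗ[k] V} {p' : ℕ → W →ₗ[k] W} (hp : OrthFam p)
    (hp' : OrthFam p') (n : ℕ) : FiniteDimensional k (range (kTensorGr p p' n)) := by
  have := hp.fin
  have := hp'.fin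
  let φ := fun ij : ℕ × ℕ =>
    TensorProduct.map (fixSub (p ij.1)).subtype (fixSub (p' ij.2)).subtype
  have hle : range (kTensorGr p p' n) ≤
      (Finset.HasAntidiagonal.antidiagonal n).sup fun ij => range (φ ij) := by
    rintro _ ⟨z, rfl⟩
    rw [kTensorGr, LinearMap.sum_apply]
    refine Submodule.sum_mem _ fun ij hij => ?_
    refine Finset.le_sup (f := fun ij => range (φ ij)) hij ?_
    have : TensorProduct.map (p ij.1) (p' ij.2) = φ ij ∘ₗ
        TensorProduct.map ((p ij.1).codRestrict (fixSub (p ij.1)) (hp.idem _))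
          ((p' ij.2).codRestrict (fixSub (p' ij.2)) (hp'.idem _)) := by
      rw [← TensorProduct.map_comp]
      rfl
    rw [this]
    exact ⟨_, rfl⟩
  have := Submodule.finiteDimensional_finset_sup (K := k) (Finset.HasAntidiagonal.antidiagonal n)
    (fun ij => range (φ ij))
  exact Submodule.finiteDimensional_of_le hle

end Orth

section Graded
variable {k A : Type u} [Field k] [CommRing A] [Algebra k A] {q : ℕ → A →ₗ[k] A}

/-- A grading on the `A`-module `M`, encoded by its family of projections `p n`, compatible with the
grading `q` of `A` and with finite-dimensional graded pieces. -/
structure GrMod (q : ℕ → A →ₗ[k] A) {M : Type u} [AddCommGroup M] [Module k M] [Module A M]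
    (p : ℕ → M →ₗ[k] M) : Prop extends OrthFam p where
  smul : ∀ n (r : A) x, p n (r • x) =
    ∑ ab ∈ Finset.HasAntidiagonal.antidiagonal n, q ab.1 r • p ab.2 x

variable {M N L : Type u} [AddCommGroup M] [Module k M] [Module A M] [IsScalarTower k A M]
  [AddCommGroup N] [Module k N] [Module A N] [IsScalarTower k A N]
  [AddCommGroup L] [Module k L] [Module A L] [IsScalarTower k A L]
  {p : ℕ → M →ₗ[k] M} {p' : ℕ → N →ₗ[k] N} {p'' : ℕ → L →ₗ[k] L}

/-- The projection of `M ⊗[A] N` onto its degree `n` part. -/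
noncomputable def tensorGr (hp : GrMod q p) (hp' : GrMod q p') (n : ℕ) :
    M ⊗[A] N →ₗ[k] M ⊗[A] N :=
  let f : M ⊗[A] N →+ M ⊗[A] N := TensorProduct.liftAddHom
    (AddMonoidHom.mk' (fun x => AddMonoidHom.mk'
      (fun y => ∑ ij ∈ Finset.HasAntidiagonal.antidiagonal n, p ij.1 x ⊗ₜ[A] p' ij.2 y)
      (fun y z => by simp [TensorProduct.tmul_add, Finset.sum_add_distrib]))
      (fun x z => by ext y; simp [TensorProduct.add_tmul, Finset.sum_add_distrib]))
    (fun r x y => by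
      simp only [AddMonoidHom.mk'_apply, hp.smul, hp'.smul, TensorProduct.sum_tmul,
        TensorProduct.tmul_sum, Finset.sum_sigma']
      refine Finset.sum_bij' (fun s _ => ⟨(s.2.2, s.2.1 + s.1.2), (s.2.1, s.1.2)⟩)
        (fun s _ => ⟨(s.2.1 + s.1.1, s.2.2), (s.2.1, s.1.1)⟩) ?_ ?_ ?_ ?_ ?_
      · rintro ⟨⟨a, b⟩, ⟨c, d⟩⟩ h
        simp at h ⊢; omega
      · rintro ⟨⟨a, b⟩, ⟨c, d⟩⟩ h
        simp at h ⊢; omega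
      · rintro ⟨⟨a, b⟩, ⟨c, d⟩⟩ h
        simp at h
        obtain ⟨h1, rfl⟩ := h
        rfl
      · rintro ⟨⟨a, b⟩, ⟨c, d⟩⟩ h
        simp at h
        obtain ⟨h1, rfl⟩ := h
        rfl
      · rintro ⟨⟨a, b⟩, ⟨c, d⟩⟩ h
        simp [TensorProduct.smul_tmul])
  { f with
    map_smul' := fun c z => by
      change f (c • z) = c • f z
      induction z using TensorProduct.induction_on with
      | zero => simp
      | add x y hx hy => rw [smul_add, map_add, hx, hy, map_add, smul_add]
      | tmul x y =>
        rw [TensorProduct.smul_tmul']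
        simp [f, Finset.smul_sum, TensorProduct.smul_tmul'] }

@[simp] lemma tensorGr_tmul (hp : GrMod q p) (hp' : GrMod q p') (n : ℕ) (x : M) (y : N) :
    tensorGr hp hp' n (x ⊗ₜ y) = ∑ ij ∈ Finset.HasAntidiagonal.antidiagonal n, p ij.1 x ⊗ₜ[A] p' ij.2 y := rfl

lemma tensorGr_idem (hp : GrMod q p) (hp' : GrMod q p') (n : ℕ) (z : M ⊗[A] N) :
    tensorGr hp hp' n (tensorGr hp hp' n z) = tensorGr hp hp' n z := by
  induction z using TensorProduct.induction_on with
  | zero => simp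
  | add x y hx hy => simp only [map_add, hx, hy]
  | tmul x y =>
    simp only [tensorGr_tmul, map_sum]
    refine Finset.sum_congr rfl fun ij hij => ?_
    rw [Finset.sum_eq_single ij]
    · rw [hp.idem, hp'.idem]
    · intro b hb hne
      rw [hp.orth, if_neg (OrthFam.antidiagonal_ne hb hij hne), TensorProduct.zero_tmul]
    · exact fun h => absurd hij h

lemma tensorGr_rTensor (hp : GrMod q p) (hp' : GrMod q p') (hp'' : GrMod q p'') (f : M →ₗ[A] L)
    (hf : ∀ n x, f (p n x) = p'' n (f x)) (n : ℕ) (z : M ⊗[A] N) :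
    f.rTensor N (tensorGr hp hp' n z) = tensorGr hp'' hp' n (f.rTensor N z) := by
  induction z using TensorProduct.induction_on with
  | zero => simp
  | add x y hx hy => simp only [map_add, hx, hy]
  | tmul x y => simp [hf]

lemma tensorGr_lTensor (hp : GrMod q p) (hp' : GrMod q p') (hp'' : GrMod q p'') (f : M →ₗ[A] L)
    (hf : ∀ n x, f (p n x) = p'' n (f x)) (n : ℕ) (z : N ⊗[A] M) :
    f.lTensor N (tensorGr hp' hp n z) = tensorGr hp' hp'' n (f.lTensor N z) := by
  induction z using TensorProduct.induction_on with
  | zero => simp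
  | add x y hx hy => simp only [map_add, hx, hy]
  | tmul x y => simp [hf]

lemma tensorGr_comm (hp : GrMod q p) (hp' : GrMod q p') (n : ℕ) (z : M ⊗[A] N) :
    TensorProduct.comm A M N (tensorGr hp hp' n z) =
      tensorGr hp' hp n (TensorProduct.comm A M N z) := by
  induction z using TensorProduct.induction_on with
  | zero => simp
  | add x y hx hy => simp only [map_add, hx, hy]
  | tmul x y =>
    simp only [tensorGr_tmul, map_sum, TensorProduct.comm_tmul]
    exact Finset.Nat.sum_antidiagonal_swap (f := fun ij => p' ij.1 y ⊗ₜ[A] p ij.2 x)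

/-- The graded pieces of `M ⊗[A] N` are finite-dimensional, as `M ⊗[A] N` is a graded quotient of
`M ⊗[k] N`. -/
lemma tensorGr_fin (hp : GrMod q p) (hp' : GrMod q p') (n : ℕ) :
    FiniteDimensional k (fixSub (tensorGr hp hp' n)) := by
  let π := TensorProduct.mapOfCompatibleSMul A k k M N
  have hπ : ∀ w, tensorGr hp hp' n (π w) = π (kTensorGr p p' n w) := fun w => by
    induction w using TensorProduct.induction_on with
    | zero => simp
    | add x y hx hy => simp only [map_add, hx, hy]
    | tmul x y => simp [π, kTensorGr_tmul]
  have := kTensorGr_range_fin hp.toOrthFam hp'.toOrthFam n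
  refine Submodule.finiteDimensional_of_le
    (S₂ := (range (kTensorGr p p' n)).map π) fun z hz => ?_
  obtain ⟨w, rfl⟩ := TensorProduct.mapOfCompatibleSMul_surjective A k k M N z
  exact ⟨kTensorGr p p' n w, ⟨w, rfl⟩, (hπ w).symm.trans hz⟩

/-- The degree `n` part of the `ε`-eigenspace of the swap on `M ⊗[A] M`, for `ε = ±1`. -/
def symPart (hp : GrMod q p) (ε : ℤ) (n : ℕ) : Submodule k (M ⊗[A] M) where
  carrier := {z | tensorGr hp hp n z = z ∧ TensorProduct.comm A M M z = (ε : k) • z}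
  add_mem' := by
    rintro x y ⟨h1, h2⟩ ⟨h3, h4⟩
    exact ⟨by rw [map_add, h1, h3], by rw [map_add, h2, h4, smul_add]⟩
  zero_mem' := by simp
  smul_mem' := by
    rintro c x ⟨h1, h2⟩
    refine ⟨by rw [map_smul, h1], ?_⟩
    rw [LinearMapClass.map_smul_of_tower, h2, smul_comm]

lemma mem_symPart {hp : GrMod q p} {ε : ℤ} {n : ℕ} {z : M ⊗[A] M} : z ∈ symPart hp ε n ↔
    tensorGr hp hp n z = z ∧ TensorProduct.comm A M M z = (ε : k) • z := Iff.rfl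

lemma symPart_fin (hp : GrMod q p) (ε : ℤ) (n : ℕ) : FiniteDimensional k (symPart hp ε n) := by
  have := tensorGr_fin hp hp n
  exact Submodule.finiteDimensional_of_le (S₂ := fixSub (tensorGr hp hp n)) fun z hz => hz.1

end Graded

/-! ### The exact sequence of a syzygy -/

section Syzygy
variable {k A : Type u} [Field k] [CommRing A] [Algebra k A] {q : ℕ → A →ₗ[k] A}
variable {M F : Type u} [AddCommGroup M] [Module k M] [Module A M] [IsScalarTower k A M]
  [AddCommGroup F] [Module k F] [Module A F] [IsScalarTower k A F]
  {p : ℕ → M →ₗ[k] M} {pF : ℕ → F →ₗ[k] F}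

/-- The grading induced on the kernel of a graded map. -/
def kerGr (f : F →ₗ[A] M) (hf : ∀ n x, f (pF n x) = p n (f x)) (n : ℕ) : ker f →ₗ[k] ker f where
  toFun x := ⟨pF n x, by rw [mem_ker, hf, mem_ker.1 x.2, map_zero]⟩
  map_add' x y := Subtype.ext (by simp)
  map_smul' c x := Subtype.ext (by simp)

@[simp] lemma kerGr_coe (f : F →ₗ[A] M) (hf : ∀ n x, f (pF n x) = p n (f x)) (n : ℕ) (x : ker f) :
    (kerGr f hf n x : F) = pF n x := rfl

lemma kerGr_grMod (hpF : GrMod q pF) (f : F →ₗ[A] M) (hf : ∀ n x, f (pF n x) = p n (f x)) :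
    GrMod q (kerGr f hf) where
  orth i j x := by
    apply Subtype.ext
    rw [kerGr_coe, kerGr_coe, hpF.orth]
    split_ifs <;> rfl
  smul n r x := by
    apply Subtype.ext
    simp [hpF.smul]
  fin n := by
    have := hpF.fin n
    let φ : fixSub (kerGr f hf n) →ₗ[k] fixSub (pF n) :=
      { toFun := fun x => ⟨x.1.1, congrArg Subtype.val x.2⟩
        map_add' := fun _ _ => rfl
        map_smul' := fun _ _ => rfl }
    refine FiniteDimensional.of_injective φ fun x y h => ?_
    have h' : x.1.1 = y.1.1 := congrArg (fun z : fixSub (pF n) => (z : F)) h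
    exact Subtype.ext (Subtype.ext h')

/-- Additivity of dimension in degree `n` along `0 → ker f → F → M → 0`. -/
lemma finrank_kerGr (hpF : GrMod q pF) (f : F →ₗ[A] M) (hs : Surjective f)
    (hf : ∀ n x, f (pF n x) = p n (f x)) (n : ℕ) :
    Module.finrank k (fixSub (p n)) + Module.finrank k (fixSub (kerGr f hf n)) =
      Module.finrank k (fixSub (pF n)) := by
  have := (kerGr_grMod hpF f hf).fin n
  have := hpF.fin n
  have h := finrank_four (k := k) (0 : ker f →ₗ[k] ker f) ((ker f).subtype.restrictScalars k)
    (f.restrictScalars k) ⊥ (fixSub (kerGr f hf n)) (fixSub (pF n)) (fixSub (p n))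
    (by simp) (fun x hx => congrArg Subtype.val hx)
    (fun x hx => by simp at hx ⊢; rw [← hf, hx])
    (by simp) (by simp)
    (fun y hy h0 => ⟨0, by simp, Subtype.ext h0.symm⟩)
    (fun x _ => x.2)
    (fun y hy h0 => ⟨⟨y, h0⟩, Subtype.ext hy, rfl⟩)
    (fun z hz => by
      obtain ⟨y, rfl⟩ := hs z
      refine ⟨pF n y, hpF.idem n y, ?_⟩
      exact (hf n y).trans hz)
  simpa using h

/-- For a graded flat cover `f : F → M` with kernel `N`, and `X_ε` the `ε`-eigenspace of the swap `σ`,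
there is an exact sequence `0 → (N ⊗ N)_{-ε} → N ⊗ F → (F ⊗ F)_ε → (M ⊗ M)_ε → 0`, whose middle map is
`z ↦ z + ε σ(z)`; this counts dimensions in degree `n`. Injectivity on the left is `Tor₁(M, N) = 0`,
and `Tor₁(M, M) = 0` forces the kernel of the middle map into the image of `N ⊗ N`. -/
lemma finrank_symPart_syzygy [Module.Flat A F] (h2 : (2 : k) ≠ 0) (hp : GrMod q p)
    (hpF : GrMod q pF) (f : F →ₗ[A] M)
    (hs : Surjective f) (hf : ∀ n x, f (pF n x) = p n (f x))
    (hM : TorOneZero A M M) (hN : TorOneZero A M (ker f)) (ε : ℤ) (hε : ε * ε = 1) (n : ℕ) :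
    Module.finrank k (symPart hp ε n) +
      Module.finrank k (fixSub (tensorGr (kerGr_grMod hpF f hf) hpF n)) =
    Module.finrank k (symPart hpF ε n) +
      Module.finrank k (symPart (kerGr_grMod hpF f hf) (-ε) n) := by
  set hpN := kerGr_grMod hpF f hf with hpN_def
  have hi : ∀ n x, (ker f).subtype (kerGr f hf n x) = pF n ((ker f).subtype x) := fun _ _ => rfl
  set i := (ker f).subtype with hi_def
  have hεk : (ε : k) * (ε : k) = 1 := by exact_mod_cast congrArg (Int.cast : ℤ → k) hε
  let e : k := ε
  change e * e = 1 at hεk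
  let ι := i.rTensor F
  let α := i.lTensor (ker f)
  let c := TensorProduct.map f f
  let σ := TensorProduct.comm A F F
  let σN := TensorProduct.comm A (ker f) (ker f)
  let σM := TensorProduct.comm A M M
  have smulσ : ∀ (r : k) x, σ (r • x) = r • σ x := fun r x => map_smul_of_tower σ.toLinearMap r x
  have smulσM : ∀ (r : k) x, σM (r • x) = r • σM x := fun r x => map_smul_of_tower σM.toLinearMap r x
  have smulι : ∀ (r : k) x, ι (r • x) = r • ι x := fun r x => map_smul_of_tower ι r x
  have smulc : ∀ (r : k) x, c (r • x) = r • c x := fun r x => map_smul_of_tower c r x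
  have σσ : ∀ x, σ (σ x) = x := fun x => by
    induction x using TensorProduct.induction_on with
    | zero => simp
    | add x y hx hy => simp only [map_add, hx, hy]
    | tmul x y => rfl
  have ι_inj : Injective ι :=
    Module.Flat.rTensor_preserves_injective_linearMap i (Submodule.subtype_injective _)
  have α_inj : Injective α := by
    have := hN F f hs
    rwa [← LinearMap.lTensor_inj_iff_rTensor_inj] at this
  have σα : ∀ w, ι (α (σN w)) = σ (ι (α w)) := fun w => by
    induction w using TensorProduct.induction_on with
    | zero => simp
    | add x y hx hy => simp only [map_add, hx, hy]
    | tmul x y => rfl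
  have cσ : ∀ w, c (σ w) = σM (c w) := fun w => by
    induction w using TensorProduct.induction_on with
    | zero => simp
    | add x y hx hy => simp only [map_add, hx, hy]
    | tmul x y => rfl
  have cι : ∀ w, c (ι w) = 0 := fun w => by
    induction w using TensorProduct.induction_on with
    | zero => simp
    | add x y hx hy => simp only [map_add, hx, hy, add_zero]
    | tmul x y => simp [c, ι, i]
  have tι : ∀ w, ι (tensorGr hpN hpF n w) = tensorGr hpF hpF n (ι w) :=
    tensorGr_rTensor hpN hpF hpF i hi n
  have tα : ∀ w, α (tensorGr hpN hpN n w) = tensorGr hpN hpF n (α w) :=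
    tensorGr_lTensor hpN hpN hpF i hi n
  have tσ : ∀ w, σ (tensorGr hpF hpF n w) = tensorGr hpF hpF n (σ w) := tensorGr_comm hpF hpF n
  have tc : ∀ w, c (tensorGr hpF hpF n w) = tensorGr hp hp n (c w) := fun w => by
    induction w using TensorProduct.induction_on with
    | zero => simp
    | add x y hx hy => simp only [map_add, hx, hy]
    | tmul x y => simp [c, hf]
  let b : ker f ⊗[A] F →ₗ[k] F ⊗[A] F :=
    { toFun := fun z => ι z + e • σ (ι z)
      map_add' := fun x y => by simp only [map_add, smul_add]; abel
      map_smul' := fun r x => by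
        simp only [smulι, smulσ, smul_add, RingHom.id_apply, smul_comm e r] }
  have hbdef : ∀ z, b z = ι z + e • σ (ι z) := fun _ => rfl
  have tb : ∀ w, b (tensorGr hpN hpF n w) = tensorGr hpF hpF n (b w) := fun w => by
    rw [hbdef, hbdef, tι, tσ, map_add, map_smul]
  have hex := TensorProduct.map_ker (exact_subtype_ker_map f) hs (exact_subtype_ker_map f) hs
  have := tensorGr_fin hpN hpF n
  have := symPart_fin hpF ε n
  refine finrank_four (k := k) (α.restrictScalars k) b (c.restrictScalars k)
    (symPart hpN (-ε) n) (fixSub (tensorGr hpN hpF n)) (symPart hpF ε n) (symPart hp ε n)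
    ?_ ?_ ?_ ?_ ?_ ?_ ?_ ?_ ?_
  · rintro x ⟨hx, -⟩
    change tensorGr hpN hpF n (α x) = α x
    rw [← tα, hx]
  · intro x hx
    rw [mem_fixSub] at hx
    refine ⟨by rw [← tb, hx], ?_⟩
    change σ (b x) = e • b x
    rw [hbdef, map_add, smulσ, σσ, smul_add, smul_smul, hεk, one_smul, add_comm]
  · rintro x ⟨hx, hx'⟩
    change tensorGr hp hp n (c x) = c x ∧ σM (c x) = e • c x
    rw [← tc, hx, ← cσ, ← smulc]
    exact ⟨rfl, congrArg c hx'⟩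
  · intro x _ hx
    exact α_inj (hx.trans (map_zero α).symm)
  · rintro x ⟨-, hx⟩
    change b (α x) = 0
    have hx' : σN x = (-e) • x := by simpa [e] using hx
    have h3 : α ((-e) • x) = (-e) • α x := map_smul_of_tower α _ _
    rw [hbdef, ← σα, hx', h3, smulι, smul_smul, mul_neg, hεk, neg_smul, one_smul, add_neg_cancel]
  · intro y hy hby
    rw [mem_fixSub] at hy
    have hιy : ι y = (-e) • σ (ι y) := by
      rw [neg_smul]; exact eq_neg_of_add_eq_zero_left hby
    have hσιy : σ (ι y) = (-e) • ι y := by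
      have := congrArg σ hιy
      rwa [smulσ, σσ] at this
    -- By `Tor₁(M, M) = 0` this can be checked in `F ⊗ M`, where `ι y = -ε σ(ι y)` maps to zero because
    -- `σ (ι y)` comes from `F ⊗ N`.
    have h3 : f.lTensor (ker f) y = 0 := by
      have hMi := hM F f hs
      apply hMi
      have e1 : ∀ w, (ker f).subtype.rTensor M (f.lTensor (ker f) w) = f.lTensor F (ι w) :=
        fun w => by
          induction w using TensorProduct.induction_on with
          | zero => simp
          | add x y hx hy => simp only [map_add, hx, hy]
          | tmul x y => rfl
      have e2 : ∀ w, f.lTensor F (σ (ι w)) = 0 := fun w => by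
        induction w using TensorProduct.induction_on with
        | zero => simp
        | add x y hx hy => simp only [map_add, hx, hy, add_zero]
        | tmul x y => simp [ι, σ, i]
      rw [e1, map_zero, hιy, map_smul_of_tower, e2, smul_zero]
    obtain ⟨w, rfl⟩ := (lTensor_exact (ker f) (exact_subtype_ker_map f) hs y).1 h3
    refine ⟨w, ⟨?_, ?_⟩, rfl⟩
    · apply α_inj
      rw [tα]
      exact hy
    · apply α_inj
      apply ι_inj
      change ι (α (σN w)) = ι (α (((-ε : ℤ) : k) • w))
      have h4 : α ((-e) • w) = (-e) • α w := map_smul_of_tower α _ _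
      rw [σα, Int.cast_neg, h4, smulι]
      exact hσιy
  · intro x _
    change c (b x) = 0
    rw [hbdef, map_add, smulc, cσ, cι, map_zero, smul_zero, add_zero]
  · rintro y ⟨hy, hy'⟩ hcy
    change σ y = e • y at hy'
    have hmem : y ∈ ker (TensorProduct.map f f) := hcy
    rw [hex, Submodule.mem_sup] at hmem
    obtain ⟨_, ⟨u, rfl⟩, _, ⟨v, rfl⟩, huv⟩ := hmem
    have hu : (ker f).subtype.lTensor F u = σ (ι (TensorProduct.comm A F (ker f) u)) := by
      clear huv
      induction u using TensorProduct.induction_on with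
      | zero => simp
      | add x y hx hy => simp only [map_add, hx, hy]
      | tmul x y => rfl
    set u' := TensorProduct.comm A F (ker f) u
    have hv : (ker f).subtype.rTensor F v = ι v := rfl
    rw [hu, hv] at huv
    -- `y = (y + ε σ(y)) / 2`, and the kernel of `F ⊗ F → M ⊗ M` is the sum of `N ⊗ F` and its swap.
    let x₀ := (2⁻¹ : k) • (v + e • u')
    have hx₀ : b x₀ = y := by
      have h5 : y = (2⁻¹ : k) • (y + e • σ y) := by
        rw [hy', smul_smul, hεk, one_smul, ← two_smul k y, smul_smul, inv_mul_cancel₀ h2, one_smul]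
      rw [h5, map_smul, hbdef, ← huv]
      simp only [map_add, smulι, smulσ, smul_add, smul_smul, σσ, hεk, one_smul]
      abel
    refine ⟨tensorGr hpN hpF n x₀, tensorGr_idem hpN hpF n x₀, ?_⟩
    rw [tb, hx₀, hy]
  · rintro z ⟨hz, hz'⟩
    change σM z = e • z at hz'
    obtain ⟨y₀, hy₀⟩ := TensorProduct.map_surjective hs hs z
    change c y₀ = z at hy₀
    let y := (2⁻¹ : k) • (y₀ + e • σ y₀)
    have hσy : σ y = e • y := by
      simp only [y, smulσ, map_add, σσ, smul_add, smul_smul, mul_comm _ e, ← mul_assoc, hεk]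
      rw [one_mul, add_comm]
    have hcy : c y = z := by
      simp only [y, smulc, map_add, cσ, hy₀, hz', smul_smul, hεk, one_smul]
      rw [← two_smul k z, smul_smul, inv_mul_cancel₀ h2, one_smul]
    refine ⟨tensorGr hpF hpF n y, ⟨tensorGr_idem hpF hpF n y, ?_⟩, ?_⟩
    · change σ _ = e • _
      rw [tσ, hσy, map_smul]
    · change c _ = z
      rw [tc, hcy, hz]

end Syzygy

/-! ### Homogeneous bases and dimension counts -/

section Involution

/-- For an involution `π` of a finite set, the functions with `g ∘ π = ε g` form a space of
dimension `(#ι + ε #{fixed points}) / 2`. -/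
lemma finrank_involution {k : Type u} [Field k] (h2 : (2 : k) ≠ 0) {ι : Type} [Fintype ι]
    [DecidableEq ι] (π : ι → ι) (hπ : ∀ s, π (π s) = s) (ε : ℤ) (hε : ε = 1 ∨ ε = -1)
    (E : Submodule k (ι → k)) (hE : ∀ g, g ∈ E ↔ ∀ s, g (π s) = (ε : k) * g s) :
    2 * (Module.finrank k E : ℤ) = Fintype.card ι + ε * Fintype.card {s // π s = s} := by
  classical
  -- `D` picks one point of each two-element orbit and, when `ε = 1`, all the fixed points; restriction
  -- to `D` is then an isomorphism. The order only serves to make the choice.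
  let _ : LinearOrder ι := LinearOrder.lift' _ (Fintype.equivFin ι).injective
  let D : Finset ι := Finset.univ.filter fun s => s < π s ∨ (π s = s ∧ ε = 1)
  have hεk : (ε : k) * ε = 1 := by rcases hε with rfl | rfl <;> simp
  have hD : ∀ s, s ∈ D → π s ∈ D → π s = s ∧ ε = 1 := by
    intro s h1 h2
    simp only [D, Finset.mem_filter, Finset.mem_univ, true_and, hπ] at h1 h2
    rcases h1 with h1 | h1
    · rcases h2 with h2 | h2
      · exact absurd h1 h2.not_gt
      · exact ⟨h2.1.symm, h2.2⟩
    · exact h1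
  have hD' : ∀ s, s ∉ D → π s ∉ D → π s = s ∧ ε = -1 := by
    intro s h1 h2
    simp only [D, Finset.mem_filter, Finset.mem_univ, true_and, hπ, not_or, not_lt, not_and] at h1 h2
    have h3 := le_antisymm h1.1 h2.1
    exact ⟨h3, hε.resolve_left (h1.2 h3)⟩
  let φ : E ≃ₗ[k] (D → k) :=
    { toFun := fun g s => g.1 s
      map_add' := fun _ _ => rfl
      map_smul' := fun _ _ => rfl
      invFun := fun h => ⟨fun s => if hs : s ∈ D then h ⟨s, hs⟩ else
          if hs : π s ∈ D then ε * h ⟨π s, hs⟩ else 0, by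
        rw [hE]
        intro s
        by_cases h1 : s ∈ D <;> by_cases h3 : π s ∈ D
        · obtain ⟨h4, rfl⟩ := hD s h1 h3
          simp [h1, h4]
        · simp [h1, h3, hπ]
        · simp [h1, h3, ← mul_assoc, hεk]
        · simp [h1, h3, hπ]⟩
      left_inv := fun g => by
        apply Subtype.ext
        funext s
        have hg := (hE g.1).1 g.2
        by_cases h1 : s ∈ D
        · simp [h1]
        · by_cases h3 : π s ∈ D
          · simp [h1, h3, hg, ← mul_assoc, hεk]
          · obtain ⟨h4, rfl⟩ := hD' s h1 h3
            have h5 := hg s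
            rw [h4] at h5
            have h6 : (2 : k) * g.1 s = 0 := by
              push_cast at h5; linear_combination h5
            simp [h1, h3, (mul_eq_zero.1 h6).resolve_left h2]
      right_inv := fun h => by
        funext s
        simp [s.2] }
  have e1 : Module.finrank k E = D.card := by
    rw [φ.finrank_eq]; simp
  have e2 : (Finset.univ.filter fun s => s < π s).card =
      (Finset.univ.filter fun s => π s < s).card := by
    refine Finset.card_bij' (fun s _ => π s) (fun s _ => π s) ?_ ?_ ?_ ?_ <;> simp [hπ]
  have e3 : Fintype.card ι = (Finset.univ.filter fun s => s < π s).card +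
      (Finset.univ.filter fun s => π s < s).card + (Finset.univ.filter fun s => π s = s).card := by
    rw [← Finset.card_union_of_disjoint, ← Finset.card_union_of_disjoint, ← Finset.card_univ]
    · congr 1
      ext s
      simp only [Finset.mem_union, Finset.mem_filter, Finset.mem_univ, true_and, true_iff]
      rcases lt_trichotomy s (π s) with h | h | h
      · exact Or.inl (Or.inl h)
      · exact Or.inr h.symm
      · exact Or.inl (Or.inr h)
    · rw [Finset.disjoint_left]
      intro s
      simp only [Finset.mem_union, Finset.mem_filter, Finset.mem_univ, true_and]
      rintro (h | h)
      · exact h.ne'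
      · exact h.ne
    · rw [Finset.disjoint_left]
      intro s
      simp only [Finset.mem_filter, Finset.mem_univ, true_and]
      exact fun h => h.not_gt
  rw [e1, Fintype.card_subtype]
  rcases hε with rfl | rfl
  · have : D.card = (Finset.univ.filter fun s => s < π s).card +
        (Finset.univ.filter fun s => π s = s).card := by
      rw [← Finset.card_union_of_disjoint]
      · congr 1; ext s; simp [D]
      · rw [Finset.disjoint_left]
        intro s
        simp only [Finset.mem_filter, Finset.mem_univ, true_and]
        exact fun h => h.ne'
    omega
  · have : D = (Finset.univ.filter fun s => s < π s) := by ext s; simp [D]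
    rw [this]
    omega

end Involution

section HBasis
variable {k V W : Type u} [Field k] [AddCommGroup V] [Module k V] [AddCommGroup W] [Module k W]

/-- A homogeneous basis of the part of `V` of degree at most `n`: vectors `v s` of degree `deg s`
with coordinate functionals `c s` on the whole of `V`, in terms of which the projections
`p i`, `i ≤ n`, are expressed. -/
structure HBasis (p : ℕ → V →ₗ[k] V) (n : ℕ) where
  ι : Type
  [ft : Fintype ι]
  [de : DecidableEq ι]
  deg : ι → ℕ
  v : ι → V
  c : ι → V →ₗ[k] k
  biorth : ∀ s t, c s (v t) = if s = t then 1 else 0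
  expand : ∀ i ≤ n, ∀ x, p i x = ∑ s, if deg s = i then c s x • v s else 0

attribute [instance] HBasis.ft HBasis.de

variable {p : ℕ → V →ₗ[k] V} {p' : ℕ → W →ₗ[k] W} {n : ℕ}

lemma HBasis.c_p (b : HBasis p n) {i : ℕ} (hi : i ≤ n) (s : b.ι) (x : V) :
    b.c s (p i x) = if b.deg s = i then b.c s x else 0 := by
  rw [b.expand i hi, map_sum, Finset.sum_eq_single s]
  · split_ifs <;> simp [b.biorth]
  · intro t _ hts
    split_ifs
    · simp [b.biorth, hts.symm]
    · simp
  · simp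

/-- In coordinates, `p i` is the coordinate projection. -/
def HBasis.equiv (b : HBasis p n) {i : ℕ} (hi : i ≤ n) :
    fixSub (p i) ≃ₗ[k] ({s // b.deg s = i} → k) where
  toFun x s := b.c s x
  map_add' _ _ := by ext; simp
  map_smul' _ _ := by ext; simp
  invFun g := ⟨∑ s, g s • b.v s, by
    rw [mem_fixSub, map_sum]
    refine Finset.sum_congr rfl fun s _ => ?_
    rw [map_smul, b.expand i hi, Finset.sum_eq_single s.1]
    · simp [b.biorth, s.2]
    · intro t _ hts
      simp [b.biorth, hts]
    · simp⟩
  left_inv x := by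
    apply Subtype.ext
    have hx : p i x = x := x.2
    conv_rhs => rw [← hx, b.expand i hi]
    rw [← Finset.sum_filter]
    exact (Finset.sum_subtype _ (by simp) (fun s => b.c s x • b.v s)).symm
  right_inv g := by
    funext s
    simp [b.biorth, Subtype.ext_iff.symm]

lemma HBasis.finrank (b : HBasis p n) {i : ℕ} (hi : i ≤ n) :
    Module.finrank k (fixSub (p i)) = Fintype.card {s // b.deg s = i} := by
  rw [(b.equiv hi).finrank_eq, Module.finrank_fintype_fun_eq_card]

/-- Eigenspaces of an involution which permutes the coordinates of a homogeneous basis. -/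
lemma HBasis.finrank_eigen (b : HBasis p n) {i : ℕ} (hi : i ≤ n) (h2 : (2 : k) ≠ 0)
    (π : b.ι → b.ι) (hπ : ∀ s, π (π s) = s) (hdeg : ∀ s, b.deg (π s) = b.deg s)
    (σ : V →ₗ[k] V) (hσ : ∀ s x, b.c s (σ x) = b.c (π s) x) (hσp : ∀ x, σ (p i x) = p i (σ x))
    (ε : ℤ) (hε : ε = 1 ∨ ε = -1)
    (S : Submodule k V) (hS : ∀ x, x ∈ S ↔ p i x = x ∧ σ x = (ε : k) • x) :
    2 * (Module.finrank k S : ℤ) = Fintype.card {s // b.deg s = i} +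
      ε * Fintype.card {s // b.deg s = i ∧ π s = s} := by
  let π' : {s // b.deg s = i} → {s // b.deg s = i} := fun s => ⟨π s, (hdeg s).trans s.2⟩
  let e := b.equiv hi
  let E : Submodule k ({s // b.deg s = i} → k) :=
    { carrier := {g | ∀ s, g (π' s) = (ε : k) * g s}
      add_mem' := fun {g h} hg hh s => by
        simp only [Set.mem_ofPred_eq] at hg hh
        simp [hg s, hh s, mul_add]
      zero_mem' := by simp
      smul_mem' := fun r g hg s => by
        simp only [Set.mem_ofPred_eq] at hg
        simp [hg s, mul_left_comm] }
  have h1 : Module.finrank k S = Module.finrank k E := by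
    have hle : S ≤ fixSub (p i) := fun x hx => ((hS x).1 hx).1
    rw [← (Submodule.comapSubtypeEquivOfLe hle).finrank_eq]
    refine finrank_congr e _ _ fun x => ?_
    have hx : p i x = x := x.2
    rw [Submodule.mem_comap, Submodule.subtype_apply, hS]
    constructor
    · rintro ⟨-, h⟩ s
      change b.c (π s) x = ε * b.c s x
      rw [← hσ, h, map_smul, smul_eq_mul]
    · intro h
      refine ⟨hx, ?_⟩
      have hσx : p i (σ x) = σ x := by rw [← hσp, hx]
      have : (⟨σ x, hσx⟩ : fixSub (p i)) = (ε : k) • x := by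
        apply e.injective
        funext s
        rw [map_smul]
        change b.c s (σ x) = ε * b.c s x
        rw [hσ]
        exact h s
      exact congrArg Subtype.val this
  rw [h1, finrank_involution h2 π' (fun s => Subtype.ext (hπ s)) ε hε E (fun g => Iff.rfl)]
  congr 3
  refine Fintype.card_congr ((Equiv.subtypeEquivRight fun s => ?_).trans
    (Equiv.subtypeSubtypeEquivSubtypeInter _ _))
  exact Subtype.ext_iff

/-- The bases of the finitely many graded pieces of degree at most `n`, put together. -/
lemma OrthFam.exists_hBasis (hp : OrthFam p) (n : ℕ) : Nonempty (HBasis p n) := by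
  classical
  have := hp.fin
  let bas := fun i => Module.finBasis k (fixSub (p i))
  let pr := fun i => (p i).codRestrict (fixSub (p i)) (hp.idem i)
  refine ⟨⟨Σ i : Fin (n + 1), Fin (Module.finrank k (fixSub (p i))), fun s => s.1,
    fun s => (bas s.1 s.2 : V), fun s => (bas s.1).coord s.2 ∘ₗ pr s.1, ?_, ?_⟩⟩
  · rintro ⟨i, s⟩ ⟨j, t⟩
    by_cases hij : i = j
    · subst hij
      have : pr i (bas i t : V) = bas i t := Subtype.ext (bas i t).2
      simp only [LinearMap.comp_apply, this]
      simp [Finsupp.single_apply, eq_comm]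
    · have : pr i (bas j t : V) = 0 := by
        apply Subtype.ext
        change p i (bas j t : V) = 0
        have h1 : p j (bas j t : V) = bas j t := (bas j t).2
        rw [← h1, hp.orth, if_neg (fun h => hij (Fin.ext h))]
      simp only [LinearMap.comp_apply, this]
      rw [map_zero, if_neg]
      simp [hij]
  · intro i hi x
    rw [Fintype.sum_sigma, Finset.sum_eq_single ⟨i, by omega⟩]
    · have h1 := congrArg Subtype.val ((bas i).sum_repr (pr i x))
      rw [AddSubmonoidClass.coe_finsetSum] at h1
      simp only [if_true]
      exact h1.symm
    · intro j _ hj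
      refine Finset.sum_eq_zero fun t _ => if_neg fun h => hj (Fin.ext h)
    · simp

/-- The products of the elements of two homogeneous bases form a homogeneous basis. -/
noncomputable def HBasis.tensor (b : HBasis p n) (b' : HBasis p' n) :
    HBasis (kTensorGr p p') n where
  ι := b.ι × b'.ι
  deg s := b.deg s.1 + b'.deg s.2
  v s := b.v s.1 ⊗ₜ b'.v s.2
  c s := LinearMap.mul' k k ∘ₗ TensorProduct.map (b.c s.1) (b'.c s.2)
  biorth s t := by
    by_cases h1 : s.1 = t.1 <;> by_cases h2 : s.2 = t.2 <;>
      simp [b.biorth, b'.biorth, Prod.ext_iff, h1, h2]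
  expand i hi z := by
    induction z using TensorProduct.induction_on with
    | zero => simp
    | add x y hx hy =>
      rw [map_add, hx, hy, ← Finset.sum_add_distrib]
      refine Finset.sum_congr rfl fun s _ => ?_
      split_ifs
      · rw [map_add, add_smul]
      · rw [add_zero]
    | tmul x y =>
      rw [kTensorGr_tmul]
      have h1 : ∀ ij ∈ Finset.HasAntidiagonal.antidiagonal i, p ij.1 x ⊗ₜ[k] p' ij.2 y =
          ∑ s : b.ι × b'.ι, if b.deg s.1 = ij.1 ∧ b'.deg s.2 = ij.2 then
            (b.c s.1 x • b.v s.1) ⊗ₜ[k] (b'.c s.2 y • b'.v s.2) else 0 := by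
        intro ij hij
        rw [Finset.HasAntidiagonal.mem_antidiagonal] at hij
        rw [b.expand ij.1 (by omega), b'.expand ij.2 (by omega), TensorProduct.sum_tmul,
          Fintype.sum_prod_type]
        refine Finset.sum_congr rfl fun s _ => ?_
        rw [TensorProduct.tmul_sum]
        refine Finset.sum_congr rfl fun t _ => ?_
        by_cases h1 : b.deg s = ij.1 <;> by_cases h2 : b'.deg t = ij.2 <;> simp [h1, h2]
      rw [Finset.sum_congr rfl h1, Finset.sum_comm]
      refine Finset.sum_congr rfl fun s _ => ?_
      split_ifs with h
      · rw [Finset.sum_eq_single (b.deg s.1, b'.deg s.2)]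
        · simp [TensorProduct.smul_tmul', TensorProduct.tmul_smul, smul_smul, mul_comm]
        · rintro ⟨a, c⟩ _ hne
          rw [if_neg]
          rintro ⟨rfl, rfl⟩
          exact hne rfl
        · intro h'
          exact absurd (Finset.HasAntidiagonal.mem_antidiagonal.2 h) h'
      · refine Finset.sum_eq_zero fun ij hij => if_neg ?_
        rw [Finset.HasAntidiagonal.mem_antidiagonal] at hij
        rintro ⟨h1, h2⟩
        exact h (by omega)

lemma card_deg_add {ι ι' : Type} [Fintype ι] [Fintype ι'] (d : ι → ℕ) (d' : ι' → ℕ) (n : ℕ) :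
    Fintype.card {s : ι × ι' // d s.1 + d' s.2 = n} =
      ∑ ij ∈ Finset.HasAntidiagonal.antidiagonal n,
        Fintype.card {s // d s = ij.1} * Fintype.card {s // d' s = ij.2} := by
  classical
  simp only [Fintype.card_subtype]
  rw [Finset.card_eq_sum_card_fiberwise (f := fun s : ι × ι' => (d s.1, d' s.2))
    (t := Finset.HasAntidiagonal.antidiagonal n) (by intro s; simp)]
  refine Finset.sum_congr rfl fun ij hij => ?_
  rw [← Finset.card_product]
  congr 1
  rw [Finset.HasAntidiagonal.mem_antidiagonal] at hij
  ext ⟨s, t⟩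
  simp [Prod.ext_iff]
  omega

/-- The Hilbert series of a family of projections. -/
noncomputable def hs (p : ℕ → V →ₗ[k] V) : PowerSeries ℚ :=
  PowerSeries.mk fun n => (Module.finrank k (fixSub (p n)) : ℚ)

/-- The Hilbert series of a family of projections, with `t` replaced by `t²`. -/
noncomputable def hsSq (p : ℕ → V →ₗ[k] V) : PowerSeries ℚ :=
  PowerSeries.mk fun n => if 2 ∣ n then (Module.finrank k (fixSub (p (n / 2))) : ℚ) else 0

/-- Hilbert series are multiplicative for tensor products over `k`. -/
lemma hs_kTensorGr (hp : OrthFam p) (hp' : OrthFam p') :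
    hs (kTensorGr p p') = hs p * hs p' := by
  ext n
  obtain ⟨b⟩ := hp.exists_hBasis n
  obtain ⟨b'⟩ := hp'.exists_hBasis n
  rw [PowerSeries.coeff_mul, hs, PowerSeries.coeff_mk, (b.tensor b').finrank le_rfl]
  refine (congrArg Nat.cast (card_deg_add b.deg b'.deg n)).trans ?_
  rw [Nat.cast_sum]
  refine Finset.sum_congr rfl fun ij hij => ?_
  rw [Finset.HasAntidiagonal.mem_antidiagonal] at hij
  rw [hs, hs, PowerSeries.coeff_mk, PowerSeries.coeff_mk, b.finrank (by omega : ij.1 ≤ n),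
    b'.finrank (by omega : ij.2 ≤ n), Nat.cast_mul]

end HBasis

/-! ### Free modules -/

section Free
variable {k V W : Type u} [Field k] [AddCommGroup V] [Module k V] [AddCommGroup W] [Module k W]
  {p : ℕ → V →ₗ[k] V} {p' : ℕ → W →ₗ[k] W}

lemma orthFam_kTensorGr (hp : OrthFam p) (hp' : OrthFam p') : OrthFam (kTensorGr p p') where
  orth i j z := by
    induction z using TensorProduct.induction_on with
    | zero => simp
    | add x y hx hy =>
      simp only [map_add, hx, hy]
      split_ifs <;> simp
    | tmul x y =>
      simp only [kTensorGr_tmul, map_sum]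
      split_ifs with hij
      · subst hij
        refine Finset.sum_congr rfl fun ij hij => ?_
        rw [Finset.sum_eq_single ij]
        · rw [hp.idem, hp'.idem]
        · intro b hb hne
          rw [hp.orth, if_neg (OrthFam.antidiagonal_ne hb hij hne), TensorProduct.zero_tmul]
        · exact fun h => absurd hij h
      · refine Finset.sum_eq_zero fun a ha => Finset.sum_eq_zero fun b hb => ?_
        rw [Finset.HasAntidiagonal.mem_antidiagonal] at ha hb
        rw [hp.orth, hp'.orth]
        split_ifs with h1 h3
        · omega
        all_goals simp
  fin n := by
    have := kTensorGr_range_fin hp hp' n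
    exact Submodule.finiteDimensional_of_le (S₂ := range (kTensorGr p p' n)) fun z hz => ⟨z, hz⟩

variable {A : Type u} [CommRing A] [Algebra k A] {q : ℕ → A →ₗ[k] A}
  {M N : Type u} [AddCommGroup M] [Module k M] [AddCommGroup N] [Module k N] [Module A N]
  [IsScalarTower k A N]
  {pM : ℕ → M →ₗ[k] M} {pN : ℕ → N →ₗ[k] N}

/-- The grading of the free module `A ⊗[k] M`. -/
lemma freeGr_grMod (hq : GrMod q q) (hp : OrthFam pM) : GrMod q (kTensorGr q pM) where
  toOrthFam := orthFam_kTensorGr hq.toOrthFam hp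
  smul n r z := by
    induction z using TensorProduct.induction_on with
    | zero => simp
    | add x y hx hy => simp only [map_add, smul_add, hx, hy, Finset.sum_add_distrib]
    | tmul a x =>
      rw [TensorProduct.smul_tmul']
      simp only [kTensorGr_tmul, hq.smul, TensorProduct.sum_tmul, Finset.smul_sum, Finset.sum_sigma',
        TensorProduct.smul_tmul']
      refine Finset.sum_bij' (fun s _ => ⟨(s.2.1, s.2.2 + s.1.2), (s.2.2, s.1.2)⟩)
        (fun s _ => ⟨(s.1.1 + s.2.1, s.2.2), (s.1.1, s.2.1)⟩) ?_ ?_ ?_ ?_ ?_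
      · rintro ⟨⟨a, b⟩, ⟨c, d⟩⟩ h
        simp at h ⊢; omega
      · rintro ⟨⟨a, b⟩, ⟨c, d⟩⟩ h
        simp at h ⊢; omega
      · rintro ⟨⟨a, b⟩, ⟨c, d⟩⟩ h
        simp at h
        obtain ⟨h1, rfl⟩ := h
        rfl
      · rintro ⟨⟨a, b⟩, ⟨c, d⟩⟩ h
        simp at h
        obtain ⟨h1, rfl⟩ := h
        rfl
      · rintro ⟨⟨a, b⟩, ⟨c, d⟩⟩ h
        rfl

lemma kTensorGr_one_tmul (hq1 : ∀ i, q i 1 = if i = 0 then 1 else 0) (n : ℕ) (x : M) :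
    kTensorGr q pM n (1 ⊗ₜ x) = 1 ⊗ₜ pM n x := by
  rw [kTensorGr_tmul, Finset.sum_eq_single (0, n)]
  · simp [hq1]
  · rintro ⟨a, b⟩ h hne
    rw [Finset.HasAntidiagonal.mem_antidiagonal] at h
    rw [hq1, if_neg, TensorProduct.zero_tmul]
    rintro rfl
    apply hne
    simp at h
    rw [h]
  · intro h
    exact absurd (Finset.HasAntidiagonal.mem_antidiagonal.2 (zero_add n)) h

/-- As `N ⊗[A] (A ⊗[k] M) ≅ N ⊗[k] M`, its Hilbert series is `H_N(t) H_M(t)`. -/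
lemma hs_tensorGr_free (hq : GrMod q q) (hq1 : ∀ i, q i 1 = if i = 0 then 1 else 0)
    (hp : OrthFam pM) (hpN : GrMod q pN) (n : ℕ) :
    (Module.finrank k (fixSub (tensorGr hpN (freeGr_grMod hq hp) n)) : ℚ) =
      PowerSeries.coeff n (hs pN * hs pM) := by
  rw [← hs_kTensorGr hpN.toOrthFam hp, hs, PowerSeries.coeff_mk]
  congr 1
  let e := TensorProduct.AlgebraTensorModule.cancelBaseChange k A A N M
  have he : ∀ x y, e.symm (x ⊗ₜ y) = x ⊗ₜ (1 ⊗ₜ y) := fun x y => by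
    rw [LinearEquiv.symm_apply_eq]
    simp [e]
  have key : ∀ w, e.symm (kTensorGr pN pM n w) = tensorGr hpN (freeGr_grMod hq hp) n (e.symm w) := by
    intro w
    induction w using TensorProduct.induction_on with
    | zero => simp
    | add x y hx hy => simp only [map_add, hx, hy]
    | tmul x y => simp only [he, kTensorGr_tmul, map_sum, tensorGr_tmul, kTensorGr_one_tmul hq1]
  symm
  refine finrank_congr (e.symm.restrictScalars k) _ _ fun x => ?_
  rw [mem_fixSub, mem_fixSub]
  change _ ↔ tensorGr _ _ n (e.symm x) = e.symm x
  rw [← key]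
  exact e.symm.injective.eq_iff.symm

section Distrib
variable (D : A ⊗[k] (M ⊗[k] M) ≃ₗ[A] (A ⊗[k] M) ⊗[A] (A ⊗[k] M))

/-- The isomorphism `A ⊗ M ⊗ M ≅ F ⊗[A] F`, for `F = A ⊗[k] M`, is graded. -/
lemma distrib_tensorGr (hD : ∀ a x y, D (a ⊗ₜ (x ⊗ₜ y)) = (a ⊗ₜ x) ⊗ₜ (1 ⊗ₜ y)) (hq : GrMod q q) (hq1 : ∀ i, q i 1 = if i = 0 then 1 else 0)
    (hp : OrthFam pM) (n : ℕ) (w : A ⊗[k] (M ⊗[k] M)) :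
    D (kTensorGr q (kTensorGr pM pM) n w) =
      tensorGr (freeGr_grMod hq hp) (freeGr_grMod hq hp) n (D w) := by
  induction w using TensorProduct.induction_on with
  | zero => simp
  | add x y hx hy => simp only [map_add, hx, hy]
  | tmul a w =>
    induction w using TensorProduct.induction_on with
    | zero => simp
    | add x y hx hy => simp only [TensorProduct.tmul_add, map_add, hx, hy]
    | tmul x y =>
      simp only [kTensorGr_tmul, hD, tensorGr_tmul, kTensorGr_one_tmul hq1,
        TensorProduct.tmul_sum, map_sum, TensorProduct.sum_tmul, Finset.sum_sigma']
      refine Finset.sum_bij' (fun s _ => ⟨(s.1.1 + s.2.1, s.2.2), (s.1.1, s.2.1)⟩)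
        (fun s _ => ⟨(s.2.1, s.2.2 + s.1.2), (s.2.2, s.1.2)⟩) ?_ ?_ ?_ ?_ ?_
      · rintro ⟨⟨a, b⟩, ⟨c, d⟩⟩ h
        simp at h ⊢; omega
      · rintro ⟨⟨a, b⟩, ⟨c, d⟩⟩ h
        simp at h ⊢; omega
      · rintro ⟨⟨a, b⟩, ⟨c, d⟩⟩ h
        simp at h
        obtain ⟨h1, rfl⟩ := h
        rfl
      · rintro ⟨⟨a, b⟩, ⟨c, d⟩⟩ h
        simp at h
        obtain ⟨h1, rfl⟩ := h
        rfl
      · rintro ⟨⟨a, b⟩, ⟨c, d⟩⟩ h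
        rfl

/-- The isomorphism `A ⊗ M ⊗ M ≅ F ⊗[A] F`, for `F = A ⊗[k] M`, commutes with the swaps. -/
lemma distrib_comm (hD : ∀ a x y, D (a ⊗ₜ (x ⊗ₜ y)) = (a ⊗ₜ x) ⊗ₜ (1 ⊗ₜ y)) (w : A ⊗[k] (M ⊗[k] M)) :
    D ((TensorProduct.comm k M M).toLinearMap.lTensor A w) =
      TensorProduct.comm A (A ⊗[k] M) (A ⊗[k] M) (D w) := by
  induction w using TensorProduct.induction_on with
  | zero => simp
  | add x y hx hy => simp only [map_add, hx, hy]
  | tmul a w =>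
    induction w using TensorProduct.induction_on with
    | zero => simp
    | add x y hx hy => simp only [TensorProduct.tmul_add, map_add, hx, hy]
    | tmul x y =>
      simp only [LinearMap.lTensor_tmul, LinearEquiv.coe_coe, TensorProduct.comm_tmul, hD]
      have h1 : ∀ z : M, a ⊗ₜ[k] z = a • ((1 : A) ⊗ₜ[k] z) := fun z => by
        rw [TensorProduct.smul_tmul', smul_eq_mul, mul_one]
      rw [h1, h1, TensorProduct.smul_tmul]

lemma finrank_symPart_free_eq (hD : ∀ a x y, D (a ⊗ₜ (x ⊗ₜ y)) = (a ⊗ₜ x) ⊗ₜ (1 ⊗ₜ y)) (hq : GrMod q q)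
    (hq1 : ∀ i, q i 1 = if i = 0 then 1 else 0)
    (hp : OrthFam pM) (ε : ℤ) (n : ℕ) (S : Submodule k (A ⊗[k] (M ⊗[k] M)))
    (hS : ∀ x, x ∈ S ↔ kTensorGr q (kTensorGr pM pM) n x = x ∧
      (TensorProduct.comm k M M).toLinearMap.lTensor A x = (ε : k) • x) :
    Module.finrank k S = Module.finrank k (symPart (freeGr_grMod hq hp) ε n) := by
  refine finrank_congr (k := k) (V := A ⊗[k] (M ⊗[k] M)) (W := (A ⊗[k] M) ⊗[A] (A ⊗[k] M))
    (D.restrictScalars k) _ _ fun x => ?_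
  rw [hS, mem_symPart]
  have h3 : (ε : k) • D x = D ((ε : k) • x) :=
    (LinearMap.map_smul_of_tower D.toLinearMap _ _).symm
  have e : D.restrictScalars k x = D x := rfl
  rw [e, ← distrib_tensorGr D hD hq hq1 hp, ← distrib_comm D hD, h3, D.injective.eq_iff, D.injective.eq_iff]

end Distrib

lemma HBasis.coeff_sq {n : ℕ} (b : HBasis pM n) {i : ℕ} (hi : i ≤ n) :
    PowerSeries.coeff i (hsSq pM) = Fintype.card {s // 2 * b.deg s = i} := by
  rw [hsSq, PowerSeries.coeff_mk]
  split_ifs with h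
  · rw [b.finrank (by omega)]
    congr 1
    exact Fintype.card_congr (Equiv.subtypeEquivRight fun s => by omega)
  · have : IsEmpty {s // 2 * b.deg s = i} := ⟨fun s => h ⟨_, s.2.symm⟩⟩
    simp

/-- The eigenspaces of the swap on `A ⊗ M ⊗ M`: the swap permutes a homogeneous basis. -/
lemma finrank_eigen_triple (h2 : (2 : k) ≠ 0) (hq : OrthFam q) (hp : OrthFam pM) (ε : ℤ)
    (hε : ε = 1 ∨ ε = -1) (n : ℕ) (S : Submodule k (A ⊗[k] (M ⊗[k] M)))
    (hS : ∀ x, x ∈ S ↔ kTensorGr q (kTensorGr pM pM) n x = x ∧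
      (TensorProduct.comm k M M).toLinearMap.lTensor A x = (ε : k) • x) :
    2 * (Module.finrank k S : ℚ) =
      PowerSeries.coeff n (hs q * hs pM ^ 2) + ε * PowerSeries.coeff n (hs q * hsSq pM) := by
  obtain ⟨bA⟩ := hq.exists_hBasis n
  obtain ⟨b⟩ := hp.exists_hBasis n
  let B : HBasis (kTensorGr q (kTensorGr pM pM)) n := bA.tensor (b.tensor b)
  let π : B.ι → B.ι := fun s => (s.1, (s.2.2, s.2.1))
  have h3 := B.finrank_eigen le_rfl h2 π (fun s => rfl)
    (fun s => by simp [B, π, HBasis.tensor, add_comm])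
    ((TensorProduct.comm k M M).toLinearMap.lTensor A)
    (fun s x => by
      induction x using TensorProduct.induction_on with
      | zero => simp
      | add x y hx hy => simp only [map_add, hx, hy]
      | tmul a w =>
        induction w using TensorProduct.induction_on with
        | zero => simp
        | add x y hx hy => simp only [TensorProduct.tmul_add, map_add, hx, hy]
        | tmul x y => simp [B, π, HBasis.tensor, mul_comm])
    (fun x => by
      induction x using TensorProduct.induction_on with
      | zero => simp
      | add x y hx hy => simp only [map_add, hx, hy]
      | tmul a w =>
        simp only [kTensorGr_tmul, map_sum, LinearMap.lTensor_tmul]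
        refine Finset.sum_congr rfl fun ij _ => ?_
        congr 1
        induction w using TensorProduct.induction_on with
        | zero => simp
        | add x y hx hy => simp only [map_add, hx, hy]
        | tmul x y =>
          simp only [kTensorGr_tmul, map_sum, LinearEquiv.coe_coe, TensorProduct.comm_tmul]
          exact Finset.Nat.sum_antidiagonal_swap (f := fun ij => pM ij.1 y ⊗ₜ[k] pM ij.2 x))
    ε hε S hS
  have h4 := congrArg (Int.cast : ℤ → ℚ) h3
  simp only [Int.cast_mul, Int.cast_add, Int.cast_natCast, Int.cast_ofNat] at h4
  rw [h4]
  congr 1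
  · rw [pow_two, ← hs_kTensorGr hp hp, ← hs_kTensorGr hq (orthFam_kTensorGr hp hp), hs,
      PowerSeries.coeff_mk, B.finrank le_rfl]
  · congr 1
    -- The basis vectors fixed by the swap are the `a ⊗ x ⊗ x`, of degree `deg a + 2 deg x`.
    have h5 : Fintype.card {s : B.ι // B.deg s = n ∧ π s = s} =
        Fintype.card {s : bA.ι × b.ι // bA.deg s.1 + 2 * b.deg s.2 = n} := by
      refine Fintype.card_congr
        { toFun := fun s => ⟨(s.1.1, s.1.2.1), ?_⟩
          invFun := fun s => ⟨(s.1.1, (s.1.2, s.1.2)), ?_, rfl⟩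
          left_inv := ?_
          right_inv := fun s => rfl }
      · obtain ⟨⟨r, s, t⟩, h, h'⟩ := s
        simp only [π] at h'
        obtain ⟨-, rfl, -⟩ := h'
        change bA.deg r + (b.deg s + b.deg s) = n at h
        change bA.deg r + 2 * b.deg s = n
        omega
      · obtain ⟨⟨r, s⟩, h⟩ := s
        change bA.deg r + (b.deg s + b.deg s) = n
        change bA.deg r + 2 * b.deg s = n at h
        omega
      · rintro ⟨⟨r, s, t⟩, h, h'⟩
        simp only [π] at h'
        obtain ⟨-, rfl, -⟩ := h'
        rfl
    refine (congrArg Nat.cast (h5.trans (card_deg_add bA.deg (fun s => 2 * b.deg s) n))).trans ?_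
    rw [PowerSeries.coeff_mul, Nat.cast_sum]
    refine Finset.sum_congr rfl fun ij hij => ?_
    rw [Finset.HasAntidiagonal.mem_antidiagonal] at hij
    rw [hs, PowerSeries.coeff_mk, bA.finrank (by omega : ij.1 ≤ n),
      b.coeff_sq (by omega : ij.2 ≤ n), Nat.cast_mul]

/-- The formula of the theorem for the free module `F = A ⊗[k] M`, where `F ⊗[A] F ≅ A ⊗ M ⊗ M`:
`2 H_{(F ⊗ F)_ε}(t) = H_A(t) (H_M(t)² + ε H_M(t²))`. -/
lemma finrank_symPart_free (h2 : (2 : k) ≠ 0) (hq : GrMod q q)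
    (hq1 : ∀ i, q i 1 = if i = 0 then 1 else 0)
    (hp : OrthFam pM) (ε : ℤ) (hε : ε = 1 ∨ ε = -1) (n : ℕ) :
    2 * (Module.finrank k (symPart (freeGr_grMod hq hp) ε n) : ℚ) =
      PowerSeries.coeff n (hs q * hs pM ^ 2) + ε * PowerSeries.coeff n (hs q * hsSq pM) := by
  let σ := (TensorProduct.comm k M M).toLinearMap.lTensor A
  let S : Submodule k (A ⊗[k] (M ⊗[k] M)) :=
    fixSub (kTensorGr q (kTensorGr pM pM) n) ⊓ ker (σ - (ε : k) • LinearMap.id)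
  have hS : ∀ x, x ∈ S ↔ kTensorGr q (kTensorGr pM pM) n x = x ∧ σ x = (ε : k) • x := by
    intro x
    rw [Submodule.mem_inf, mem_fixSub, mem_ker, LinearMap.sub_apply, sub_eq_zero]
    rfl
  rw [← finrank_symPart_free_eq (TensorProduct.AlgebraTensorModule.distribBaseChange k A M M)
    (fun a x y => rfl) hq hq1 hp ε n S hS]
  exact finrank_eigen_triple h2 hq.toOrthFam hp ε hε n S hS

end Free

/-! ### The defect and its vanishing -/

section Series
variable {k A : Type u} [Field k] [CommRing A] [Algebra k A] {q : ℕ → A →ₗ[k] A}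

lemma hsSq_kTensorGr {V W : Type u} [AddCommGroup V] [Module k V] [AddCommGroup W] [Module k W]
    {p : ℕ → V →ₗ[k] V} {p' : ℕ → W →ₗ[k] W} (hp : OrthFam p) (hp' : OrthFam p') :
    hsSq (kTensorGr p p') = hsSq p * hsSq p' := by
  ext n
  obtain ⟨b⟩ := hp.exists_hBasis n
  obtain ⟨b'⟩ := hp'.exists_hBasis n
  rw [PowerSeries.coeff_mul, (b.tensor b').coeff_sq le_rfl]
  have h : Fintype.card {s // 2 * (b.tensor b').deg s = n} =
      Fintype.card {s : b.ι × b'.ι // 2 * b.deg s.1 + 2 * b'.deg s.2 = n} :=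
    Fintype.card_congr (Equiv.subtypeEquivRight fun s => by
      change 2 * (b.deg s.1 + b'.deg s.2) = n ↔ _
      rw [mul_add])
  rw [h, card_deg_add (fun s => 2 * b.deg s) (fun s => 2 * b'.deg s), Nat.cast_sum]
  refine Finset.sum_congr rfl fun ij hij => ?_
  rw [Finset.HasAntidiagonal.mem_antidiagonal] at hij
  rw [b.coeff_sq (by omega : ij.1 ≤ n), b'.coeff_sq (by omega : ij.2 ≤ n), Nat.cast_mul]

variable {M : Type u} [AddCommGroup M] [Module k M] [Module A M] [IsScalarTower k A M]
  {p : ℕ → M →ₗ[k] M}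

/-- The Hilbert series of the `ε`-eigenspace of the swap on `M ⊗[A] M`. -/
noncomputable def symSeries (hp : GrMod q p) (ε : ℤ) : PowerSeries ℚ :=
  PowerSeries.mk fun n => (Module.finrank k (symPart hp ε n) : ℚ)

/-- The failure, cleared of denominators, of the formula
`2 H_{S_ε M}(t) = H_M(t)² / H_A(t) + ε H_A(t) H_M(t²) / H_A(t²)`. -/
noncomputable def defect (hp : GrMod q p) (ε : ℤ) : PowerSeries ℚ :=
  2 * hs q * hsSq q * symSeries hp ε - hsSq q * hs p ^ 2 - (ε : PowerSeries ℚ) * hs q ^ 2 * hsSq p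

variable (A M k) in
/-- The canonical surjection `A ⊗[k] M → M`. -/
noncomputable def act : A ⊗[k] M →ₗ[A] M :=
  TensorProduct.AlgebraTensorModule.lift
    { toFun := fun r => { toFun := fun x => r • x
                          map_add' := fun x y => smul_add r x y
                          map_smul' := fun c x => by
                            rw [RingHom.id_apply, smul_comm] }
      map_add' := fun r s => by ext; simp [add_smul]
      map_smul' := fun r s => by ext; simp [mul_smul] }

@[simp] lemma act_tmul (r : A) (x : M) : act k A M (r ⊗ₜ x) = r • x := rfl

lemma act_surjective : Surjective (act k A M) := fun x => ⟨1 ⊗ₜ x, by simp⟩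

lemma act_gr (hp : GrMod q p) (n : ℕ) (z : A ⊗[k] M) :
    act k A M (kTensorGr q p n z) = p n (act k A M z) := by
  induction z using TensorProduct.induction_on with
  | zero => simp
  | add x y hx hy => simp only [map_add, hx, hy]
  | tmul a x => simp [kTensorGr_tmul, hp.smul]

/-- The syzygy `N` of the cover `F = A ⊗[k] M` of `M` has the defect of `M`, with the opposite sign: by
`H_N = H_A H_M - H_M`, `finrank_symPart_syzygy` and the formula for `F ⊗ F`, the difference of the
two defects is identically zero. -/
lemma defect_eq (h2 : (2 : k) ≠ 0) (hq : GrMod q q)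
    (hq1 : ∀ i, q i 1 = if i = 0 then 1 else 0) (hp : GrMod q p)
    (hM : TorOneZero A M M) (hN : TorOneZero A M (ker (act k A M))) (ε : ℤ)
    (hε : ε = 1 ∨ ε = -1) :
    defect hp ε =
      defect (kerGr_grMod (freeGr_grMod hq hp.toOrthFam) (act k A M) (act_gr hp)) (-ε) := by
  set hpF := freeGr_grMod hq hp.toOrthFam
  set hpN := kerGr_grMod hpF (act k A M) (act_gr hp)
  have hεε : ε * ε = 1 := by rcases hε with rfl | rfl <;> rfl
  have e1 : symSeries hp ε + hs (V := ker (act k A M)) (kerGr (act k A M) (act_gr hp)) * hs p =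
      symSeries hpF ε + symSeries hpN (-ε) := by
    ext n
    have h := finrank_symPart_syzygy h2 hp hpF (act k A M) act_surjective (act_gr hp) hM hN ε hεε n
    have h' := hs_tensorGr_free hq hq1 hp.toOrthFam hpN n
    rw [map_add, map_add, ← h', symSeries, symSeries, symSeries, PowerSeries.coeff_mk,
      PowerSeries.coeff_mk, PowerSeries.coeff_mk]
    exact_mod_cast h
  have e2 : 2 * symSeries hpF ε = hs q * hs p ^ 2 + (ε : PowerSeries ℚ) * (hs q * hsSq p) := by
    ext n
    have h := finrank_symPart_free h2 hq hq1 hp.toOrthFam ε hε n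
    have c1 : (2 : PowerSeries ℚ) = PowerSeries.C (2 : ℚ) := (map_ofNat (PowerSeries.C (R := ℚ)) 2).symm
    have c2 : (ε : PowerSeries ℚ) = PowerSeries.C (ε : ℚ) := (map_intCast (PowerSeries.C (R := ℚ)) ε).symm
    rw [map_add, c1, c2, PowerSeries.coeff_C_mul, PowerSeries.coeff_C_mul, ← h, symSeries,
      PowerSeries.coeff_mk]
  have e3 : hs p + hs (V := ker (act k A M)) (kerGr (act k A M) (act_gr hp)) = hs q * hs p := by
    rw [← hs_kTensorGr hq.toOrthFam hp.toOrthFam]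
    ext n
    have h := finrank_kerGr hpF (act k A M) act_surjective (act_gr hp) n
    rw [map_add, hs, hs, hs, PowerSeries.coeff_mk, PowerSeries.coeff_mk, PowerSeries.coeff_mk]
    exact_mod_cast h
  have e4 : hsSq p + hsSq (V := ker (act k A M)) (kerGr (act k A M) (act_gr hp)) = hsSq q * hsSq p := by
    rw [← hsSq_kTensorGr hq.toOrthFam hp.toOrthFam]
    ext n
    have h := finrank_kerGr hpF (act k A M) act_surjective (act_gr hp) (n / 2)
    rw [map_add, hsSq, hsSq, hsSq, PowerSeries.coeff_mk, PowerSeries.coeff_mk, PowerSeries.coeff_mk]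
    split_ifs
    · exact_mod_cast h
    · simp
  have e1' := eq_sub_of_add_eq e1
  have e3' := eq_sub_of_add_eq' e3
  have e4' := eq_sub_of_add_eq' e4
  rw [defect, defect, e1', e3', e4']
  push_cast
  linear_combination hs q * hsSq q * e2

/-- If `M` vanishes in degrees less than `m`, so do all the terms of its defect. -/
lemma defect_low (hp : GrMod q p) (m : ℕ) (hm : ∀ i < m, ∀ x, p i x = 0) (ε : ℤ) :
    (PowerSeries.X : PowerSeries ℚ) ^ m ∣ defect hp ε := by
  have h0 : ∀ i < m, Module.finrank k (fixSub (p i)) = 0 := fun i hi => by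
    have : fixSub (p i) = ⊥ := by
      rw [eq_bot_iff]
      intro x hx
      rw [mem_fixSub, hm i hi] at hx
      exact hx.symm
    rw [this, finrank_bot]
  have h1 : (PowerSeries.X : PowerSeries ℚ) ^ m ∣ hs p := by
    rw [PowerSeries.X_pow_dvd_iff]
    intro i hi
    rw [hs, PowerSeries.coeff_mk, h0 i hi, Nat.cast_zero]
  have h2 : (PowerSeries.X : PowerSeries ℚ) ^ m ∣ hsSq p := by
    rw [PowerSeries.X_pow_dvd_iff]
    intro i hi
    rw [hsSq, PowerSeries.coeff_mk, h0 (i / 2) (by omega), Nat.cast_zero, ite_self]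
  have h3 : (PowerSeries.X : PowerSeries ℚ) ^ m ∣ symSeries hp ε := by
    rw [PowerSeries.X_pow_dvd_iff]
    intro i hi
    have hz : ∀ z, tensorGr hp hp i z = 0 := by
      intro z
      induction z using TensorProduct.induction_on with
      | zero => simp
      | add x y hx hy => rw [map_add, hx, hy, add_zero]
      | tmul x y =>
        rw [tensorGr_tmul]
        refine Finset.sum_eq_zero fun ab hab => ?_
        rw [Finset.HasAntidiagonal.mem_antidiagonal] at hab
        rw [hm ab.1 (by omega), TensorProduct.zero_tmul]
    have : symPart hp ε i = ⊥ := by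
      rw [eq_bot_iff]
      rintro z ⟨hz', -⟩
      rw [hz] at hz'
      exact hz'.symm
    rw [symSeries, PowerSeries.coeff_mk, this, finrank_bot, Nat.cast_zero]
  rw [defect]
  exact dvd_sub (dvd_sub (h3.mul_left _) ((dvd_pow h1 two_ne_zero).mul_left _)) (h2.mul_left _)

/-- The syzygy of `A ⊗[k] M → M` lives in degrees strictly larger than those of `M`. -/
lemma kerGr_low (hp : GrMod q p) (hq0 : ∀ r, ∃ c : k, q 0 r = algebraMap k A c)
    (m : ℕ) (hm : ∀ i < m, ∀ x, p i x = 0) (i : ℕ) (hi : i < m + 1) (z : ker (act k A M)) :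
    kerGr (act k A M) (act_gr hp) i z = 0 := by
  apply Subtype.ext
  rw [kerGr_coe]
  have key : ∀ w, kTensorGr q p i w = 1 ⊗ₜ p i (act k A M w) := by
    intro w
    induction w using TensorProduct.induction_on with
    | zero => simp
    | add x y hx hy => simp only [map_add, hx, hy, TensorProduct.tmul_add]
    | tmul r x =>
      rw [kTensorGr_tmul, act_tmul, hp.smul, TensorProduct.tmul_sum]
      refine Finset.sum_congr rfl fun ab hab => ?_
      rw [Finset.HasAntidiagonal.mem_antidiagonal] at hab
      by_cases h : ab.2 < m
      · simp [hm _ h]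
      · have h1 : ab.1 = 0 := by omega
        obtain ⟨c, hc⟩ := hq0 r
        rw [h1, hc, algebraMap_smul, TensorProduct.tmul_smul, Algebra.algebraMap_eq_smul_one,
          TensorProduct.smul_tmul']
  rw [key, mem_ker.1 z.2, map_zero, TensorProduct.tmul_zero]
  rfl

/-- Passing to the syzygy does not change the defect (up to sign of `ε`), but raises the degrees in
which it can be non-zero. -/
lemma defect_dvd (h2 : (2 : k) ≠ 0) (hq : GrMod q q)
    (hq1 : ∀ i, q i 1 = if i = 0 then 1 else 0) (hq0 : ∀ r, ∃ c : k, q 0 r = algebraMap k A c)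
    (C : ModuleCat.{u} A → Prop) (c : ℕ) :
    ∀ (m : ℕ) (M : Type u) [AddCommGroup M] [Module k M] [Module A M] [IsScalarTower k A M]
      (p : ℕ → M →ₗ[k] M) (hp : GrMod q p) (_ : TorClass A C M) (_ : ∀ i < m, ∀ x, p i x = 0)
      (ε : ℤ) (_ : ε = 1 ∨ ε = -1), (PowerSeries.X : PowerSeries ℚ) ^ (m + c) ∣ defect hp ε := by
  induction c with
  | zero =>
    intro m M _ _ _ _ p hp _ hm ε _
    exact defect_low hp m hm ε
  | succ c ih =>
    intro m M _ _ _ _ p hp hC hm ε hε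
    have hC' := hC.syzygy (act k A M) act_surjective
    rw [defect_eq h2 hq hq1 hp (hC.tor _ hC.mem) (hC.tor _ hC'.mem) ε hε,
      show m + (c + 1) = m + 1 + c by omega]
    exact ih (m + 1) _ _ _ hC' (kerGr_low hp hq0 m hm) (-ε)
      (by rcases hε with rfl | rfl <;> simp)

lemma defect_eq_zero (h2 : (2 : k) ≠ 0) (hq : GrMod q q)
    (hq1 : ∀ i, q i 1 = if i = 0 then 1 else 0) (hq0 : ∀ r, ∃ c : k, q 0 r = algebraMap k A c)
    (C : ModuleCat.{u} A → Prop) (hp : GrMod q p) (hC : TorClass A C M) : defect hp 1 = 0 := by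
  ext n
  have h := defect_dvd h2 hq hq1 hq0 C (n + 1) 0 M p hp hC (by simp) 1 (Or.inl rfl)
  rw [PowerSeries.X_pow_dvd_iff] at h
  rw [h n (by omega), map_zero]

end Series

/-! ### Decompositions and the symmetric square -/

section Decomp
variable {k V : Type u} [Field k] [AddCommGroup V] [Module k V]
  (𝒱 : ℕ → Submodule k V) [DirectSum.Decomposition 𝒱]

/-- The projection onto the degree `n` part. -/
noncomputable def decProj (n : ℕ) : V →ₗ[k] V where
  toFun x := DirectSum.decompose 𝒱 x n
  map_add' x y := by simp
  map_smul' c x := by rw [DirectSum.decompose_smul]; rfl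

lemma decProj_mem (n : ℕ) (x : V) : decProj 𝒱 n x ∈ 𝒱 n := (DirectSum.decompose 𝒱 x n).2

lemma decProj_of_mem {i : ℕ} {x : V} (hx : x ∈ 𝒱 i) (n : ℕ) :
    decProj 𝒱 n x = if n = i then x else 0 := by
  split_ifs with h
  · subst h
    exact DirectSum.decompose_of_mem_same 𝒱 hx
  · exact DirectSum.decompose_of_mem_ne 𝒱 hx (Ne.symm h)

lemma fixSub_decProj (n : ℕ) : fixSub (decProj 𝒱 n) = 𝒱 n := by
  ext x
  rw [mem_fixSub]
  constructor
  · intro h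
    rw [← h]
    exact decProj_mem 𝒱 n x
  · intro h
    rw [decProj_of_mem 𝒱 h, if_pos rfl]

lemma decProj_orth (i j : ℕ) (x : V) :
    decProj 𝒱 i (decProj 𝒱 j x) = if i = j then decProj 𝒱 j x else 0 :=
  decProj_of_mem 𝒱 (decProj_mem 𝒱 j x) i

end Decomp

section DecompModule
variable {k A : Type u} [Field k] [CommRing A] [Algebra k A] (𝒜 : ℕ → Submodule k A)
  [GradedAlgebra 𝒜] {M : Type u} [AddCommGroup M] [Module k M] [Module A M] [IsScalarTower k A M]
  (ℳ : ℕ → Submodule k M) [DirectSum.Decomposition ℳ] [SetLike.GradedSMul 𝒜 ℳ]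

lemma decProj_smul (n : ℕ) (r : A) (x : M) : decProj ℳ n (r • x) =
    ∑ ab ∈ Finset.HasAntidiagonal.antidiagonal n, decProj 𝒜 ab.1 r • decProj ℳ ab.2 x := by
  induction r using DirectSum.Decomposition.inductionOn 𝒜 with
  | zero => simp
  | add r s hr hs => simp only [add_smul, map_add, hr, hs, Finset.sum_add_distrib]
  | @homogeneous i r =>
    induction x using DirectSum.Decomposition.inductionOn ℳ with
    | zero => simp
    | add x y hx hy => simp only [smul_add, map_add, hx, hy, Finset.sum_add_distrib]
    | @homogeneous j x =>
      have h : (r : A) • (x : M) ∈ ℳ (i + j) := SetLike.GradedSMul.smul_mem r.2 x.2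
      simp only [decProj_of_mem ℳ h, decProj_of_mem 𝒜 r.2, decProj_of_mem ℳ x.2]
      split_ifs with hn
      · subst hn
        rw [Finset.sum_eq_single (i, j)]
        · simp
        · rintro ⟨a, b⟩ _ hne
          by_cases ha : a = i <;> by_cases hb : b = j <;> simp_all
        · intro h'
          exact absurd (Finset.HasAntidiagonal.mem_antidiagonal.2 (rfl : i + j = i + j)) h'
      · symm
        refine Finset.sum_eq_zero fun ab hab => ?_
        rw [Finset.HasAntidiagonal.mem_antidiagonal] at hab
        by_cases ha : ab.1 = i <;> by_cases hb : ab.2 = j <;> simp [ha, hb]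
        omega

/-- Since `A_0 = k`, the degree zero part of an element of `A` is a scalar. -/
lemma decProj_zero_eq (h0 : 𝒜 0 = 1) (r : A) : ∃ c : k, decProj 𝒜 0 r = algebraMap k A c := by
  have h := decProj_mem 𝒜 0 r
  rw [h0, Submodule.mem_one] at h
  obtain ⟨c, hc⟩ := h
  exact ⟨c, hc.symm⟩

/-- The graded pieces of a finitely generated module over a Noetherian ring are
finite-dimensional: `M_n` is spanned over `k = A_0` by the degree `n` parts of any generators of
the submodule `M_{≥ n}`. -/
lemma decProj_fin [IsNoetherianRing A] [Module.Finite A M] (h0 : 𝒜 0 = 1) (n : ℕ) :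
    FiniteDimensional k (fixSub (decProj ℳ n)) := by
  let T : Submodule A M :=
    { carrier := {x | ∀ i < n, decProj ℳ i x = 0}
      add_mem' := fun {x y} hx hy i hi => by rw [map_add, hx i hi, hy i hi, add_zero]
      zero_mem' := fun i _ => map_zero _
      smul_mem' := fun r x hx i hi => by
        rw [decProj_smul 𝒜 ℳ]
        refine Finset.sum_eq_zero fun ab hab => ?_
        rw [Finset.HasAntidiagonal.mem_antidiagonal] at hab
        rw [hx ab.2 (by omega), smul_zero] }
  obtain ⟨S, hS⟩ : T.FG := IsNoetherian.noetherian T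
  have key : ∀ y ∈ T, decProj ℳ n y ∈ Submodule.span k (decProj ℳ n '' S) := by
    intro y hy
    rw [← hS] at hy
    induction hy using Submodule.span_induction with
    | mem x hx => exact Submodule.subset_span ⟨x, hx, rfl⟩
    | zero => simp
    | add x y _ _ hx hy => rw [map_add]; exact add_mem hx hy
    | smul r x hxS hx =>
      have hxT : x ∈ T := hS ▸ hxS
      obtain ⟨c, hc⟩ := decProj_zero_eq 𝒜 h0 r
      rw [decProj_smul 𝒜 ℳ, Finset.sum_eq_single (0, n)]
      · rw [hc, algebraMap_smul]
        exact Submodule.smul_mem _ _ hx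
      · rintro ⟨a, b⟩ hab hne
        rw [Finset.HasAntidiagonal.mem_antidiagonal] at hab
        have hb : b < n := by
          by_contra hb
          apply hne
          simp only [Prod.mk.injEq] at hab ⊢
          omega
        rw [hxT b hb, smul_zero]
      · intro h'
        exact absurd (Finset.HasAntidiagonal.mem_antidiagonal.2 (zero_add n)) h'
  have hfin : FiniteDimensional k (Submodule.span k (decProj ℳ n '' S)) :=
    FiniteDimensional.span_of_finite k (S.finite_toSet.image _)
  refine Submodule.finiteDimensional_of_le (S₂ := Submodule.span k (decProj ℳ n '' S)) ?_
  intro x hx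
  rw [mem_fixSub] at hx
  rw [← hx]
  refine key x fun i hi => ?_
  rw [← hx, decProj_orth, if_neg hi.ne]

lemma decProj_grMod [IsNoetherianRing A] [Module.Finite A M] (h0 : 𝒜 0 = 1) :
    GrMod (decProj 𝒜) (decProj ℳ) where
  orth := decProj_orth ℳ
  fin := decProj_fin 𝒜 ℳ h0
  smul := decProj_smul 𝒜 ℳ

lemma decProj_one (i : ℕ) : decProj 𝒜 i 1 = if i = 0 then 1 else 0 :=
  decProj_of_mem 𝒜 SetLike.GradedOne.one_mem i

lemma hilbertSeries_eq {V : Type u} [AddCommGroup V] [Module k V]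
    (𝒱 : ℕ → Submodule k V) [DirectSum.Decomposition 𝒱] :
    hilbertSeries 𝒱 = hs (decProj 𝒱) := by
  ext n
  rw [hilbertSeries, hs, PowerSeries.coeff_mk, PowerSeries.coeff_mk, fixSub_decProj]

lemma hilbertSeriesSq_eq {V : Type u} [AddCommGroup V] [Module k V]
    (𝒱 : ℕ → Submodule k V) [DirectSum.Decomposition 𝒱] :
    hilbertSeriesSq 𝒱 = hsSq (decProj 𝒱) := by
  ext n
  rw [hilbertSeriesSq, hsSq, PowerSeries.coeff_mk, PowerSeries.coeff_mk, fixSub_decProj]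

/-- As `2` is invertible, the symmetric square is isomorphic to the space of symmetric tensors. -/
lemma hilbertSeries_symmetricSquare (h2 : (2 : k) ≠ 0)
    (hp : GrMod (decProj 𝒜) (decProj ℳ))
    (𝒮 : ℕ → Submodule k (SymmetricSquare A M)) [DirectSum.Decomposition 𝒮]
    (h𝒮 : ∀ (i j : ℕ) (x y : M), x ∈ ℳ i → y ∈ ℳ j →
      (Submodule.Quotient.mk (x ⊗ₜ[A] y) : SymmetricSquare A M) ∈ 𝒮 (i + j)) :
    hilbertSeries 𝒮 = symSeries hp 1 := by
  let π : M ⊗[A] M →ₗ[A] SymmetricSquare A M := Submodule.mkQ _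
  have hπ : ∀ n z, decProj 𝒮 n (π z) = π (tensorGr hp hp n z) := by
    intro n z
    induction z using TensorProduct.induction_on with
    | zero => simp
    | add x y hx hy => simp only [map_add, hx, hy]
    | tmul x y =>
      rw [tensorGr_tmul]
      induction x using DirectSum.Decomposition.inductionOn ℳ with
      | zero => simp
      | add r s hr hs =>
        simp only [TensorProduct.add_tmul, map_add, hr, hs, Finset.sum_add_distrib]
      | @homogeneous i x =>
        induction y using DirectSum.Decomposition.inductionOn ℳ with
        | zero => simp
        | add x y hx hy =>
          simp only [TensorProduct.tmul_add, map_add, hx, hy, Finset.sum_add_distrib]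
        | @homogeneous j y =>
          have h : π ((x : M) ⊗ₜ[A] (y : M)) ∈ 𝒮 (i + j) := h𝒮 i j x y x.2 y.2
          simp only [decProj_of_mem 𝒮 h, decProj_of_mem ℳ x.2, decProj_of_mem ℳ y.2]
          split_ifs with hn
          · subst hn
            rw [Finset.sum_eq_single (i, j)]
            · simp
            · rintro ⟨a, b⟩ _ hne
              by_cases ha : a = i <;> by_cases hb : b = j <;> simp_all
            · intro h'
              exact absurd (Finset.HasAntidiagonal.mem_antidiagonal.2 (rfl : i + j = i + j)) h'
          · symm
            rw [Finset.sum_eq_zero, map_zero]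
            intro ab hab
            rw [Finset.HasAntidiagonal.mem_antidiagonal] at hab
            by_cases ha : ab.1 = i <;> by_cases hb : ab.2 = j <;> simp [ha, hb]
            omega
  let σ := TensorProduct.comm A M M
  have σσ : ∀ x, σ (σ x) = x := fun x => by
    induction x using TensorProduct.induction_on with
    | zero => simp
    | add x y hx hy => simp only [map_add, hx, hy]
    | tmul x y => rfl
  have hπσ : ∀ w, π (σ w) = π w := fun w => by
    symm
    rw [← sub_eq_zero, ← map_sub]
    refine (Submodule.Quotient.mk_eq_zero _).2 ⟨Submodule.Quotient.mk w, rfl⟩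
  have hkerπ : ∀ z, π z = 0 → ∃ w, z = w - σ w := fun z hz => by
    obtain ⟨w, rfl⟩ := (Submodule.Quotient.mk_eq_zero _).1 hz
    obtain ⟨w, rfl⟩ := Submodule.Quotient.mk_surjective _ w
    exact ⟨w, rfl⟩
  have smulσ : ∀ (r : k) x, σ (r • x) = r • σ x :=
    fun r x => LinearMap.map_smul_of_tower σ.toLinearMap r x
  have smulπ : ∀ (r : k) x, π (r • x) = r • π x := fun r x => LinearMap.map_smul_of_tower π r x
  have σt : ∀ n w, σ (tensorGr hp hp n w) = tensorGr hp hp n (σ w) := tensorGr_comm hp hp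
  ext n
  rw [hilbertSeries, symSeries, PowerSeries.coeff_mk, PowerSeries.coeff_mk]
  congr 1
  symm
  let φ : symPart hp 1 n →ₗ[k] 𝒮 n :=
    ((π.restrictScalars k).comp (symPart hp 1 n).subtype).codRestrict (𝒮 n) fun z => by
      have h : decProj 𝒮 n (π z) = π z := by rw [hπ, z.2.1]
      change π z ∈ 𝒮 n
      rw [← h]
      exact decProj_mem 𝒮 n _
  have hφ : ∀ z, (φ z : SymmetricSquare A M) = π z := fun _ => rfl
  refine (LinearEquiv.ofBijective φ ⟨?_, ?_⟩).finrank_eq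
  · rw [injective_iff_map_eq_zero]
    rintro ⟨z, hz, hz'⟩ h
    have hz0 : π z = 0 := by rw [← hφ ⟨z, hz, hz'⟩, h]; rfl
    obtain ⟨w, hw⟩ := hkerπ z hz0
    have h1 : σ z = z := by simpa using hz'
    have h3 : σ z = -z := by rw [hw, map_sub, σσ, neg_sub]
    have h4 : (2 : k) • z = 0 := by
      rw [two_smul]
      nth_rw 1 [← h1]
      rw [h3, neg_add_cancel]
    exact Subtype.ext ((smul_eq_zero.1 h4).resolve_left h2)
  · rintro ⟨s, hs⟩
    obtain ⟨z, rfl⟩ := Submodule.Quotient.mk_surjective _ s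
    change π z ∈ 𝒮 n at hs
    let t := tensorGr hp hp n z
    have ht : π t = π z := by
      rw [← hπ, decProj_of_mem 𝒮 hs, if_pos rfl]
    have htt : tensorGr hp hp n t = t := tensorGr_idem hp hp n z
    refine ⟨⟨(2⁻¹ : k) • (t + σ t), ?_, ?_⟩, ?_⟩
    · rw [map_smul, map_add, ← σt, htt]
    · change σ _ = _
      rw [smulσ, map_add, σσ, add_comm, Int.cast_one, one_smul]
    · apply Subtype.ext
      rw [hφ]
      change π ((2⁻¹ : k) • (t + σ t)) = π z
      rw [smulπ, map_add, hπσ, ht, ← two_smul k, smul_smul, inv_mul_cancel₀ h2, one_smul]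

lemma constantCoeff_hs (h0 : 𝒜 0 = 1) [Nontrivial A] :
    PowerSeries.constantCoeff (hs (decProj 𝒜)) = 1 := by
  have h : Module.finrank k (𝒜 0) = 1 := by
    rw [h0, Submodule.one_eq_span]
    exact finrank_span_singleton one_ne_zero
  rw [← PowerSeries.coeff_zero_eq_constantCoeff_apply, hs, PowerSeries.coeff_mk, fixSub_decProj, h,
    Nat.cast_one]

lemma constantCoeff_hsSq (h0 : 𝒜 0 = 1) [Nontrivial A] :
    PowerSeries.constantCoeff (hsSq (decProj 𝒜)) = 1 := by
  rw [← constantCoeff_hs 𝒜 h0, ← PowerSeries.coeff_zero_eq_constantCoeff_apply,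
    ← PowerSeries.coeff_zero_eq_constantCoeff_apply, hs, hsSq, PowerSeries.coeff_mk,
    PowerSeries.coeff_mk, if_pos (dvd_zero 2), Nat.zero_div]

end DecompModule

/-- Clearing denominators: `a`, `b` stand for `H_R(t)`, `H_R(t²)`, and `H`, `S` for `H_M(t)`,
`H_M(t²)`. -/
lemma powerSeries_formula (a b s H S : PowerSeries ℚ) (ha : PowerSeries.constantCoeff a = 1)
    (hb : PowerSeries.constantCoeff b = 1) (h : 2 * a * b * s - b * H ^ 2 - a ^ 2 * S = 0) :
    s = H ^ 2 * (2 * a)⁻¹ + a * S * (2 * b)⁻¹ := by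
  have h2 : PowerSeries.constantCoeff (2 : PowerSeries ℚ) = 2 := map_ofNat _ 2
  have ha' : (2 * a) * (2 * a)⁻¹ = 1 := PowerSeries.mul_inv_cancel _ (by simp [h2, ha])
  have hb' : (2 * b) * (2 * b)⁻¹ = 1 := PowerSeries.mul_inv_cancel _ (by simp [h2, hb])
  generalize (2 * a)⁻¹ = u at *
  generalize (2 * b)⁻¹ = v at *
  linear_combination 2 * u * v * h + (a * v * S - 2 * s * b * v) * ha' + (u * H ^ 2 - s) * hb'

end Auxiliary

theorem stmt_2 (k : Type u) [Field k] (hchar : ringChar k ≠ 2)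
    [Algebra k R] [IsNoetherianRing R]
    (𝒜 : ℕ → Submodule k R) [GradedAlgebra 𝒜] (h0 : 𝒜 0 = 1)
    [Module k M] [IsScalarTower k R M] [Module.Finite R M]
    (ℳ : ℕ → Submodule k M) [DirectSum.Decomposition ℳ] [SetLike.GradedSMul 𝒜 ℳ]
    (htor : ∀ i : ℕ, 0 < i →
      IsZero (((Tor (ModuleCat.{u} R) i).obj (ModuleCat.of R M)).obj (ModuleCat.of R M)))
    (𝒮 : ℕ → Submodule k (SymmetricSquare R M)) [DirectSum.Decomposition 𝒮]
    (h𝒮 : ∀ (i j : ℕ) (x y : M), x ∈ ℳ i → y ∈ ℳ j →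
      (Submodule.Quotient.mk (x ⊗ₜ[R] y) : SymmetricSquare R M) ∈ 𝒮 (i + j)) :
    hilbertSeries 𝒮 =
      hilbertSeries ℳ ^ 2 * (2 * hilbertSeries 𝒜)⁻¹ +
      hilbertSeries 𝒜 * hilbertSeriesSq ℳ * (2 * hilbertSeriesSq 𝒜)⁻¹ := by
  have h2 : (2 : k) ≠ 0 := Ring.two_ne_zero hchar
  have hq := decProj_grMod 𝒜 𝒜 h0
  have hp := decProj_grMod 𝒜 ℳ h0
  obtain ⟨C, hC⟩ := exists_torClass htor
  have hd := defect_eq_zero h2 hq (decProj_one 𝒜) (decProj_zero_eq 𝒜 h0) C hp hC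
  rw [hilbertSeries_symmetricSquare 𝒜 ℳ h2 hp 𝒮 h𝒮, hilbertSeries_eq 𝒜, hilbertSeries_eq ℳ,
    hilbertSeriesSq_eq 𝒜, hilbertSeriesSq_eq ℳ]
  rcases subsingleton_or_nontrivial R with hR | hR
  -- Over the zero ring all the series vanish.
  · have : Subsingleton M := Module.subsingleton R M
    have e1 : symSeries hp 1 = 0 := by
      ext n
      rw [symSeries, PowerSeries.coeff_mk, Module.finrank_zero_of_subsingleton, Nat.cast_zero,
        map_zero]
    have e2 : hs (decProj ℳ) = 0 := by
      ext n
      rw [hs, PowerSeries.coeff_mk, Module.finrank_zero_of_subsingleton, Nat.cast_zero, map_zero]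
    have e3 : hs (decProj 𝒜) = 0 := by
      ext n
      rw [hs, PowerSeries.coeff_mk, Module.finrank_zero_of_subsingleton, Nat.cast_zero, map_zero]
    simp [e1, e2, e3]
  · refine powerSeries_formula _ _ _ _ _ (constantCoeff_hs 𝒜 h0) (constantCoeff_hsSq 𝒜 h0) ?_
    simpa [defect] using hd
end
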